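/- arXiv:2103.16186 — 2 statements merged into one kernel-verified Lean document; each statement's English description precedes it below -/
import Mathlib

section
/- Let d ≥ 1 be an integer and n ≥ 0 be an integer. A nonempty subset Γ of ℕ_0^d is a contractive projection set for H^{2(n+1)}(𝕋^d) if and only if E_n(Γ) = Γ. -/
open MeasureTheory
open scoped Classical ENNReal

noncomputable section

/-- The `d`-dimensional torus, modelled as `d` copies of `ℝ/ℤ`,
whose product `volume` measure is the normalized Haar measure. -/
abbrev Torus (d : ℕ) := Fin d → AddCircle (1 : ℝ)

/-- The character `z ↦ z^α` on the torus. -/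
def torusChar {d : ℕ} (α : Fin d → ℤ) (x : Torus d) : ℂ :=
  ∏ j, fourier (α j) (x j)

/-- The trigonometric polynomial with frequencies in `F` and coefficients `a`. -/
def trigPoly {d : ℕ} (F : Finset (Fin d → ℤ)) (a : (Fin d → ℤ) → ℂ) (x : Torus d) : ℂ :=
  ∑ α ∈ F, a α * torusChar α x

/-- The set `ℕ₀^d` of multi-indices with nonnegative entries. -/
def NN (d : ℕ) : Set (Fin d → ℤ) := {α | ∀ j, 0 ≤ α j}

/-- `Λ` is a coset in `ℤ^d`, i.e. a translate of a subgroup. -/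
def IsCoset {d : ℕ} (Λ : Set (Fin d → ℤ)) : Prop :=
  ∃ (x : Fin d → ℤ) (H : AddSubgroup (Fin d → ℤ)),
    Λ = (x + ·) '' (H : Set (Fin d → ℤ))

/-- `Λ` is a contractive projection set for `L^p(𝕋^d)`:
the projection onto frequencies in `Λ` is contractive on trigonometric polynomials. -/
def IsContractiveLp (d : ℕ) (p : ℝ≥0∞) (Λ : Set (Fin d → ℤ)) : Prop :=
  ∀ (F : Finset (Fin d → ℤ)) (a : (Fin d → ℤ) → ℂ),
    eLpNorm (trigPoly (F.filter (· ∈ Λ)) a) p volume ≤ eLpNorm (trigPoly F a) p volume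

/-- `Γ` is a contractive projection set for `H^p(𝕋^d)`:
the projection onto frequencies in `Γ` is contractive on analytic polynomials. -/
def IsContractiveHp (d : ℕ) (p : ℝ≥0∞) (Γ : Set (Fin d → ℤ)) : Prop :=
  ∀ F : Finset (Fin d → ℤ), ↑F ⊆ NN d → ∀ a : (Fin d → ℤ) → ℂ,
    eLpNorm (trigPoly (F.filter (· ∈ Γ)) a) p volume ≤ eLpNorm (trigPoly F a) p volume

/-- `Γ` has dimension `k`: the subgroup generated by the differences `γ - γ₀` has rank `k`. -/
def HasDim {d : ℕ} (Γ : Set (Fin d → ℤ)) (k : ℕ) : Prop :=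
  ∀ γ₀ ∈ Γ, Module.finrank ℤ (Submodule.span ℤ ((· - γ₀) '' Γ)) = k

/-- `H^p(𝕋^d)` enjoys the contractive restriction property of dimension `k`:
every `k`-dimensional contractive projection set for `H^p(𝕋^d)` is the restriction
of a coset in `ℤ^d` to `ℕ₀^d`. -/
def ContractiveRestrictionProperty (d : ℕ) (p : ℝ≥0∞) (k : ℕ) : Prop :=
  ∀ Γ : Set (Fin d → ℤ), Γ.Nonempty → Γ ⊆ NN d → HasDim Γ k → IsContractiveHp d p Γ →
    ∃ Λ : Set (Fin d → ℤ), IsCoset Λ ∧ Γ = Λ ∩ NN d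

/-- The coset `Λ(Γ)` in `ℤ^d` generated by `Γ`. -/
def cosetGen {d : ℕ} (Γ : Set (Fin d → ℤ)) : Set (Fin d → ℤ) :=
  ⋃ γ₀ ∈ Γ, (γ₀ + ·) '' (AddSubgroup.closure ((· - γ₀) '' Γ) : Set (Fin d → ℤ))

/-- The `n`-extension `E_n(Γ)`: all points of `Λ(Γ) ∩ ℕ₀^d` at distance at most `n` from `Γ`. -/
def Eext {d : ℕ} (n : ℕ) (Γ : Set (Fin d → ℤ)) : Set (Fin d → ℤ) :=
  {lam | lam ∈ cosetGen Γ ∩ NN d ∧ ∃ γ ∈ Γ, ∃ m : (Fin d → ℤ) →₀ ℤ,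
    (↑m.support : Set (Fin d → ℤ)) ⊆ Γ \ {γ} ∧
    lam = γ + ∑ α ∈ m.support, m α • (α - γ) ∧
    (∑ α ∈ m.support, max (m α) 0) ≤ (n : ℤ) ∧
    (∑ α ∈ m.support, max (-(m α)) 0) ≤ (n : ℤ)}

/-- Iterated `n`-extensions `E_n^k(Γ)`. -/
def EextIter {d : ℕ} (n : ℕ) : ℕ → Set (Fin d → ℤ) → Set (Fin d → ℤ)
  | 0, Γ => Eext n Γ
  | (k + 1), Γ => Eext n (EextIter n k Γ)

/-- The `n`-completion `E_n^∞(Γ)`. -/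
def EextInf {d : ℕ} (n : ℕ) (Γ : Set (Fin d → ℤ)) : Set (Fin d → ℤ) :=
  ⋃ k, EextIter n k Γ

/-!
The even moments turn contractivity into an algebraic condition. By Birkhoff–James orthogonality in
`L^{2(n+1)}`, the projection onto `Γ` is contractive iff `∫ |f|^{2n} f \bar h = 0` whenever `f` has
its spectrum in `Γ` and `h` in `ℕ₀^d \ Γ`. The function `|f|^{2n} f = f^{n+1} \bar f^n` has its
spectrum in the difference set `(n+1)Γ - nΓ`, and if `f` has coefficients `1` on a finite
`F ⊆ Γ`, every frequency of `(n+1)F - nF` occurs in it with a positive coefficient. Hence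
contractivity means that `(n+1)Γ - nΓ` meets `ℕ₀^d` only in `Γ`. Writing
`γ + (γ₁ + ⋯ + γₙ) - (γ₁' + ⋯ + γₙ') = γ + ∑ (γᵢ - γ) - ∑ (γᵢ' - γ)` identifies the part of
`(n+1)Γ - nΓ` in `ℕ₀^d` with `E_n(Γ)`.
-/

section Norms

variable {X E : Type*} [MeasurableSpace X] [NormedAddCommGroup E] {μ : Measure X} {f g : X → E}

lemma eLpNorm_natCast_le_iff {k : ℕ} (hk : k ≠ 0) (hf : MemLp f k μ) (hg : MemLp g k μ) :
    eLpNorm f k μ ≤ eLpNorm g k μ ↔ ∫ x, ‖f x‖ ^ k ∂μ ≤ ∫ x, ‖g x‖ ^ k ∂μ := by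
  have eLpNorm_eq {u : X → E} (hu : MemLp u k μ) :
      eLpNorm u k μ = .ofReal ((∫ x, ‖u x‖ ^ k ∂μ) ^ (k : ℝ)⁻¹) := by
    simpa using hu.eLpNorm_eq_integral_rpow_norm (mod_cast hk) (ENNReal.natCast_ne_top k)
  rw [eLpNorm_eq hf, eLpNorm_eq hg, ENNReal.ofReal_le_ofReal_iff (by positivity),
    Real.rpow_le_rpow_iff (by positivity) (by positivity) (by positivity)]

variable [TopologicalSpace X] [CompactSpace X] [OpensMeasurableSpace X]
  [IsFiniteMeasureOnCompacts μ]

lemma memLp_of_continuous {p : ℝ≥0∞} (hf : Continuous f) : MemLp f p μ :=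
  hf.memLp_of_hasCompactSupport (.of_compactSpace f)

lemma integrable_of_continuous (hf : Continuous f) : Integrable f μ :=
  hf.integrable_of_hasCompactSupport (.of_compactSpace f)

end Norms

section BirkhoffJames

open scoped InnerProductSpace

lemma pow_succ_add_mul_sub_le_pow_succ {R : Type*} [CommRing R] [LinearOrder R]
    [IsStrictOrderedRing R] {a b : R} (ha : 0 ≤ a) (hb : 0 ≤ b) (n : ℕ) :
    a ^ (n + 1) + (n + 1) * (a ^ n * (b - a)) ≤ b ^ (n + 1) := by
  induction n with
  | zero => simp
  | succ k ih =>
    calc a ^ (k + 2) + ((k + 1 : ℕ) + 1) * (a ^ (k + 1) * (b - a))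
        = b * (a ^ (k + 1) + (k + 1) * (a ^ k * (b - a))) - (k + 1) * a ^ k * (b - a) ^ 2 := by
          push_cast; ring
      _ ≤ b * (a ^ (k + 1) + (k + 1) * (a ^ k * (b - a))) := sub_le_self _ (by positivity)
      _ ≤ b * b ^ (k + 1) := by gcongr
      _ = b ^ (k + 2) := by ring

variable {E : Type*} [NormedAddCommGroup E] [InnerProductSpace ℝ E]

lemma norm_pow_add_inner_le_norm_add_pow (u v : E) (n : ℕ) :
    ‖u‖ ^ (2 * (n + 1)) + 2 * (n + 1) * (‖u‖ ^ (2 * n) * ⟪u, v⟫_ℝ) ≤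
      ‖u + v‖ ^ (2 * (n + 1)) := by
  have tangent := pow_succ_add_mul_sub_le_pow_succ (sq_nonneg ‖u‖) (sq_nonneg ‖u + v‖) n
  have remainder : 0 ≤ (n + 1) * ((‖u‖ ^ 2) ^ n * ‖v‖ ^ 2) := by positivity
  simp only [pow_mul]
  rw [norm_add_sq_real] at tangent ⊢
  linarith

lemma eq_zero_of_forall_mul_nonneg {J : ℝ → ℝ} (hJ : ContinuousAt J 0)
    (h : ∀ ε, 0 ≤ ε * J ε) : J 0 = 0 := by
  apply le_antisymm
  · refine le_of_tendsto (hJ.mono_left (nhdsWithin_le_nhds (s := Set.Iio 0))) ?_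
    filter_upwards [self_mem_nhdsWithin] with ε hε
    exact nonpos_of_mul_nonneg_right (h ε) hε
  · refine ge_of_tendsto (hJ.mono_left (nhdsWithin_le_nhds (s := Set.Ioi 0))) ?_
    filter_upwards [self_mem_nhdsWithin] with ε hε
    exact nonneg_of_mul_nonneg_right (h ε) hε

variable {X : Type*} [TopologicalSpace X] [CompactSpace X] [MeasurableSpace X]
  [OpensMeasurableSpace X] {μ : Measure X} [IsFiniteMeasureOnCompacts μ] {f g : X → E}

lemma integral_norm_pow_add_inner_le (hf : Continuous f) (hg : Continuous g) (n : ℕ) :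
    ∫ x, ‖f x‖ ^ (2 * (n + 1)) ∂μ + 2 * (n + 1) * ∫ x, ‖f x‖ ^ (2 * n) * ⟪f x, g x⟫_ℝ ∂μ ≤
      ∫ x, ‖f x + g x‖ ^ (2 * (n + 1)) ∂μ := by
  rw [← integral_const_mul, ← integral_add (integrable_of_continuous (by fun_prop))
    (integrable_of_continuous (by fun_prop))]
  exact integral_mono (integrable_of_continuous (by fun_prop))
    (integrable_of_continuous (by fun_prop))
    fun x => norm_pow_add_inner_le_norm_add_pow (f x) (g x) n

theorem forall_integral_norm_pow_le_iff (hf : Continuous f) (hg : Continuous g) (n : ℕ) :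
    (∀ ε : ℝ, ∫ x, ‖f x‖ ^ (2 * (n + 1)) ∂μ ≤ ∫ x, ‖f x + ε • g x‖ ^ (2 * (n + 1)) ∂μ) ↔
      ∫ x, ‖f x‖ ^ (2 * n) * ⟪f x, g x⟫_ℝ ∂μ = 0 := by
  set J : ℝ → ℝ := fun ε =>
    ∫ x, ‖f x + ε • g x‖ ^ (2 * n) * ⟪f x + ε • g x, g x⟫_ℝ ∂μ with hJ
  have inner_smul (c : ℝ) (u : X → E) : ∫ x, ‖u x‖ ^ (2 * n) * ⟪u x, c • g x⟫_ℝ ∂μ =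
      c * ∫ x, ‖u x‖ ^ (2 * n) * ⟪u x, g x⟫_ℝ ∂μ := by
    simp only [real_inner_smul_right, mul_left_comm _ c, integral_const_mul]
  constructor
  · intro hmin
    have hcont : Continuous J := by
      simpa only [Measure.restrict_univ] using
        continuous_parametric_integral_of_continuous (μ := μ) (by fun_prop) isCompact_univ
    have hsign (ε : ℝ) : 0 ≤ ε * J ε := by
      -- The tangent inequality at `f + ε • g`, evaluated back at `f`.
      have tangent := integral_norm_pow_add_inner_le (μ := μ) (f := fun x => f x + ε • g x)
        (g := fun x => -ε • g x) (by fun_prop) (by fun_prop) n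
      rw [inner_smul] at tangent
      simp only [neg_smul, add_neg_cancel_right] at tangent
      have : 0 ≤ (2 * (n + 1 : ℝ)) * (ε * J ε) := by linarith [hmin ε]
      exact nonneg_of_mul_nonneg_right this (by positivity)
    simpa [hJ] using eq_zero_of_forall_mul_nonneg hcont.continuousAt hsign
  · intro h0 ε
    have tangent := integral_norm_pow_add_inner_le (μ := μ) hf (hg.const_smul ε) n
    simpa only [Pi.smul_apply, inner_smul, h0, mul_zero, add_zero] using tangent

end BirkhoffJames

section DiffSumset

variable {G : Type*} [AddCommGroup G]

/-- The difference `kΓ - lΓ` of iterated sumsets: all `γ₁ + ⋯ + γₖ - γ₁' - ⋯ - γₗ'` with summands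
in `Γ`. The summands are recorded as unordered tuples, which is how they arise in the multinomial
expansion of `f ^ k * conj (f ^ l)`. -/
def diffSumset (k l : ℕ) (Γ : Set G) : Set G :=
  {x | ∃ P : Sym G k, ∃ Q : Sym G l, (∀ α ∈ P, α ∈ Γ) ∧ (∀ α ∈ Q, α ∈ Γ) ∧
    P.toMultiset.sum - Q.toMultiset.sum = x}

lemma diffSumset_mono {k l : ℕ} {Γ Δ : Set G} (h : Γ ⊆ Δ) : diffSumset k l Γ ⊆ diffSumset k l Δ :=
  fun _ ⟨P, Q, hP, hQ, hPQ⟩ => ⟨P, Q, fun α hα => h (hP α hα), fun α hα => h (hQ α hα), hPQ⟩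

lemma exists_finset_mem_diffSumset {k l : ℕ} {Γ : Set G} {x : G} (hx : x ∈ diffSumset k l Γ) :
    ∃ F : Finset G, ↑F ⊆ Γ ∧ x ∈ diffSumset k l (F : Set G) := by
  obtain ⟨P, Q, hP, hQ, hPQ⟩ := hx
  refine ⟨P.toMultiset.toFinset ∪ Q.toMultiset.toFinset, fun α hα => ?_,
    P, Q, fun α hα => ?_, fun α hα => ?_, hPQ⟩
  · obtain hα | hα := Finset.mem_union.1 hα
    exacts [hP α (Multiset.mem_toFinset.1 hα), hQ α (Multiset.mem_toFinset.1 hα)]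
  · exact Finset.mem_union_left _ (Multiset.mem_toFinset.2 hα)
  · exact Finset.mem_union_right _ (Multiset.mem_toFinset.2 hα)

lemma subset_diffSumset_succ (n : ℕ) (Γ : Set G) : Γ ⊆ diffSumset (n + 1) n Γ := by
  intro γ hγ
  refine ⟨.replicate (n + 1) γ, .replicate n γ, fun α hα => ?_, fun α hα => ?_, ?_⟩
  · rwa [(Sym.mem_replicate.1 hα).2]
  · rwa [(Sym.mem_replicate.1 hα).2]
  · simp only [Sym.coe_replicate, Multiset.sum_replicate, succ_nsmul, add_sub_cancel_left]

lemma exists_sym_sum_eq_nsmul_add_sum {Γ : Set G} {γ : G} (hγ : γ ∈ Γ) {T : Finset G}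
    (hT : ↑T ⊆ Γ) {c : G → ℕ} {N : ℕ} (hc : ∑ α ∈ T, c α ≤ N) :
    ∃ P : Sym G N, (∀ α ∈ P, α ∈ Γ) ∧
      P.toMultiset.sum = N • γ + ∑ α ∈ T, c α • (α - γ) := by
  -- Each `α ∈ T` occurs `c α` times; copies of `γ` pad the tuple to length `N`.
  let s : Multiset G :=
    ∑ α ∈ T, .replicate (c α) α + .replicate (N - ∑ α ∈ T, c α) γ
  have card_s : s.card = N := by
    rw [Multiset.card_add, Multiset.card_sum, Multiset.card_replicate]
    simp only [Multiset.card_replicate]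
    lia
  refine ⟨⟨s, card_s⟩, fun α hα => ?_, ?_⟩
  · simp only [s, Sym.mem_mk, Multiset.mem_add, Multiset.mem_sum, Multiset.mem_replicate] at hα
    obtain ⟨β, hβ, -, rfl⟩ | ⟨-, rfl⟩ := hα
    exacts [hT hβ, hγ]
  · have sum_s : s.sum = ∑ α ∈ T, c α • α + (N - ∑ α ∈ T, c α) • γ := by
      simp [s, Multiset.sum_sum]
    have hN : N • γ = (N - ∑ α ∈ T, c α) • γ + ∑ α ∈ T, c α • γ := by
      rw [← Finset.sum_smul, ← add_smul, Nat.sub_add_cancel hc]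
    simp only [Sym.coe_mk, sum_s, hN, smul_sub, Finset.sum_sub_distrib]
    abel

lemma add_sum_zsmul_sub_mem_diffSumset {Γ : Set G} {γ : G} (hγ : γ ∈ Γ) {T : Finset G}
    (hT : ↑T ⊆ Γ) {c : G → ℤ} {n : ℕ} (hpos : ∑ α ∈ T, max (c α) 0 ≤ n)
    (hneg : ∑ α ∈ T, max (-c α) 0 ≤ n) :
    γ + ∑ α ∈ T, c α • (α - γ) ∈ diffSumset (n + 1) n Γ := by
  have hpos' : ∑ α ∈ T, (c α).toNat ≤ n + 1 := by
    zify [Int.ofNat_toNat]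
    lia
  have hneg' : ∑ α ∈ T, (-c α).toNat ≤ n := by
    zify [Int.ofNat_toNat]
    exact hneg
  obtain ⟨P, hP, sum_P⟩ := exists_sym_sum_eq_nsmul_add_sum hγ hT hpos'
  obtain ⟨Q, hQ, sum_Q⟩ := exists_sym_sum_eq_nsmul_add_sum hγ hT hneg'
  have split (α : G) : c α • (α - γ) = (c α).toNat • (α - γ) - (-c α).toNat • (α - γ) := by
    rw [← natCast_zsmul, ← natCast_zsmul, ← sub_smul, Int.toNat_sub_toNat_neg]
  refine ⟨P, Q, hP, hQ, ?_⟩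
  rw [sum_P, sum_Q, succ_nsmul]
  simp only [split, Finset.sum_sub_distrib]
  abel

end DiffSumset

section IntCount

variable {ι : Type*} [DecidableEq ι]

/-- The multiplicities of the elements of a multiset, as a finitely supported integer function. -/
def intCount (P : Multiset ι) : ι →₀ ℤ := P.toFinsupp.mapRange Nat.cast Nat.cast_zero

@[simp]
lemma intCount_apply (P : Multiset ι) (α : ι) : intCount P α = P.count α := by
  simp [intCount]

lemma linearCombination_intCount {M : Type*} [AddCommGroup M] (v : ι → M) (P : Multiset ι) :
    Finsupp.linearCombination ℤ v (intCount P) = (P.map v).sum := by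
  rw [intCount, Finsupp.linearCombination_apply, Finsupp.sum_mapRange_index (by simp), Finsupp.sum,
    Finset.sum_multiset_map_count]
  simp

lemma mem_or_mem_of_intCount_sub_ne_zero {P Q : Multiset ι} {α : ι}
    (h : (intCount P - intCount Q) α ≠ 0) : α ∈ P ∨ α ∈ Q := by
  contrapose! h
  simp [h]

lemma sum_max_intCount_sub_le_card (s : Finset ι) (P Q : Multiset ι) :
    ∑ α ∈ s, max ((intCount P - intCount Q) α) 0 ≤ P.card := by
  calc ∑ α ∈ s, max ((intCount P - intCount Q) α) 0
      ≤ ∑ α ∈ s, (P.count α : ℤ) := Finset.sum_le_sum fun α _ => by simp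
    _ ≤ ∑ α ∈ s ∪ P.toFinset, (P.count α : ℤ) :=
        Finset.sum_le_sum_of_subset_of_nonneg Finset.subset_union_left (by simp)
    _ = P.card := mod_cast Multiset.sum_count_eq_card (by simp +contextual)

end IntCount

section Extension

variable {d : ℕ} {Γ : Set (Fin d → ℤ)} {γ : Fin d → ℤ}

lemma add_sum_zsmul_sub_mem_cosetGen (hγ : γ ∈ Γ) {T : Finset (Fin d → ℤ)} (hT : ↑T ⊆ Γ)
    (c : (Fin d → ℤ) → ℤ) : γ + ∑ α ∈ T, c α • (α - γ) ∈ cosetGen Γ := by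
  refine Set.mem_biUnion hγ (Set.mem_image_of_mem _ (AddSubgroup.sum_mem _ fun α hα => ?_))
  exact AddSubgroup.zsmul_mem _ (AddSubgroup.subset_closure (Set.mem_image_of_mem _ (hT hα))) _

lemma add_sum_map_sub_mem_Eext (hγ : γ ∈ Γ) {n : ℕ} {P Q : Multiset (Fin d → ℤ)}
    (hP : ∀ α ∈ P, α ∈ Γ) (hQ : ∀ α ∈ Q, α ∈ Γ) (card_P : P.card ≤ n) (card_Q : Q.card ≤ n)
    (hNN : γ + ((P.map (· - γ)).sum - (Q.map (· - γ)).sum) ∈ NN d) :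
    γ + ((P.map (· - γ)).sum - (Q.map (· - γ)).sum) ∈ Eext n Γ := by
  -- `Eext` forbids `γ` in the support; erasing it only drops a multiple of `γ - γ`.
  set m := (intCount P - intCount Q).erase γ with hm
  have m_apply {α} (hα : α ∈ m.support) : m α = (intCount P - intCount Q) α :=
    Finsupp.erase_ne (by rintro rfl; simp [hm] at hα)
  have support_m : ↑m.support ⊆ Γ \ {γ} := by
    intro α hα
    refine ⟨?_, by rintro rfl; simp [hm] at hα⟩
    have := Finsupp.mem_support_iff.1 hα
    rw [m_apply hα] at this
    exact (mem_or_mem_of_intCount_sub_ne_zero this).elim (hP α) (hQ α)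
  have sum_m : (P.map (· - γ)).sum - (Q.map (· - γ)).sum = ∑ α ∈ m.support, m α • (α - γ) := by
    change _ = Finsupp.linearCombination ℤ (· - γ) m
    simp [hm, Finsupp.erase_eq_sub_single, linearCombination_intCount]
  rw [sum_m] at hNN ⊢
  refine ⟨⟨add_sum_zsmul_sub_mem_cosetGen hγ (support_m.trans Set.sdiff_subset) _, hNN⟩,
    γ, hγ, m, support_m, rfl, ?_, ?_⟩
  · calc ∑ α ∈ m.support, max (m α) 0
        = ∑ α ∈ m.support, max ((intCount P - intCount Q) α) 0 :=
          Finset.sum_congr rfl fun α hα => by rw [m_apply hα]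
      _ ≤ P.card := sum_max_intCount_sub_le_card _ P Q
      _ ≤ n := mod_cast card_P
  · calc ∑ α ∈ m.support, max (-m α) 0
        = ∑ α ∈ m.support, max ((intCount Q - intCount P) α) 0 :=
          Finset.sum_congr rfl fun α hα => by rw [m_apply hα, ← Finsupp.neg_apply, neg_sub]
      _ ≤ Q.card := sum_max_intCount_sub_le_card _ Q P
      _ ≤ n := mod_cast card_Q

theorem Eext_eq_diffSumset_inter_NN (n : ℕ) (Γ : Set (Fin d → ℤ)) :
    Eext n Γ = diffSumset (n + 1) n Γ ∩ NN d := by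
  ext lam
  constructor
  · rintro ⟨⟨-, hNN⟩, γ, hγ, m, hm, rfl, hpos, hneg⟩
    exact ⟨add_sum_zsmul_sub_mem_diffSumset hγ (fun α hα => (hm hα).1) hpos hneg, hNN⟩
  · rintro ⟨⟨P, Q, hP, hQ, rfl⟩, hNN⟩
    obtain ⟨γ, P', rfl⟩ := P.exists_eq_cons_of_succ
    have sum_eq : (γ ::ₛ P' : Sym _ (n + 1)).toMultiset.sum - Q.toMultiset.sum =
        γ + ((P'.toMultiset.map (· - γ)).sum - (Q.toMultiset.map (· - γ)).sum) := by
      simp only [Sym.coe_cons, Multiset.sum_cons, Multiset.sum_map_sub, Multiset.map_id',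
        Multiset.map_const', Multiset.sum_replicate, Sym.card_coe]
      abel
    rw [sum_eq] at hNN ⊢
    exact add_sum_map_sub_mem_Eext (hP γ (Sym.mem_cons_self γ P'))
      (fun α hα => hP α (Sym.mem_cons_of_mem hα)) hQ P'.card_coe.le Q.card_coe.le hNN

end Extension

section Fourier

open scoped InnerProductSpace ComplexConjugate

variable {d : ℕ}

@[fun_prop]
lemma continuous_torusChar (α : Fin d → ℤ) : Continuous (torusChar α) :=
  (UnitAddTorus.mFourier α).continuous

lemma torusChar_add (α β : Fin d → ℤ) (x : Torus d) :
    torusChar (α + β) x = torusChar α x * torusChar β x :=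
  UnitAddTorus.mFourier_add (m := α) (n := β) (x := x)

lemma torusChar_neg (α : Fin d → ℤ) (x : Torus d) : torusChar (-α) x = conj (torusChar α x) :=
  UnitAddTorus.mFourier_neg (n := α) (x := x)

lemma torusChar_sub (α β : Fin d → ℤ) (x : Torus d) :
    torusChar (α - β) x = torusChar α x * conj (torusChar β x) := by
  rw [sub_eq_add_neg, torusChar_add, torusChar_neg]

lemma torusChar_multiset_sum (P : Multiset (Fin d → ℤ)) (x : Torus d) :
    torusChar P.sum x = (P.map (torusChar · x)).prod := by
  induction P using Multiset.induction_on with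
  | empty => simp [torusChar]
  | cons α P ih => simp [torusChar_add, ih]

lemma integral_torusChar (α : Fin d → ℤ) :
    ∫ x : Torus d, torusChar α x = if α = 0 then 1 else 0 := by
  simp only [torusChar]
  rw [integral_fintype_prod_volume_eq_prod (𝕜 := ℂ)
    fun (j : Fin d) (x : AddCircle (1 : ℝ)) => (fourier (α j) x : ℂ)]
  split_ifs with h
  · simp [h, Measure.real, AddCircle.measure_univ]
  · obtain ⟨j, hj⟩ := Function.ne_iff.1 h
    exact Finset.prod_eq_zero (Finset.mem_univ j)
      (integral_eq_zero_of_add_right_eq_neg (fourier_add_half_inv_index hj one_pos))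

@[fun_prop]
lemma continuous_trigPoly (F : Finset (Fin d → ℤ)) (a : (Fin d → ℤ) → ℂ) :
    Continuous (trigPoly F a) := by
  unfold trigPoly
  fun_prop

lemma trigPoly_congr {F : Finset (Fin d → ℤ)} {a b : (Fin d → ℤ) → ℂ} (h : ∀ α ∈ F, a α = b α) :
    trigPoly F a = trigPoly F b :=
  funext fun x => Finset.sum_congr rfl fun α hα => by rw [h α hα]

lemma trigPoly_union {F G : Finset (Fin d → ℤ)} (h : Disjoint F G) (a : (Fin d → ℤ) → ℂ) :
    trigPoly (F ∪ G) a = trigPoly F a + trigPoly G a :=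
  funext fun _ => Finset.sum_union h

lemma trigPoly_smul (F : Finset (Fin d → ℤ)) (ε : ℝ) (a : (Fin d → ℤ) → ℂ) :
    trigPoly F (ε • a) = ε • trigPoly F a := by
  ext x
  simp [trigPoly, Finset.mul_sum, mul_assoc]

/-- The coefficient `(k choose P) * ∏ a α` of the tuple `P` in the multinomial expansion of
`(∑ a α z^α) ^ k`, where `k` is the length of `P`. -/
def powCoeff (a : (Fin d → ℤ) → ℂ) (P : Multiset (Fin d → ℤ)) : ℂ :=
  P.countPerms * (P.map a).prod

lemma trigPoly_pow (F : Finset (Fin d → ℤ)) (a : (Fin d → ℤ) → ℂ) (k : ℕ) (x : Torus d) :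
    trigPoly F a x ^ k =
      ∑ P ∈ F.sym k, powCoeff a P.toMultiset * torusChar P.toMultiset.sum x := by
  rw [trigPoly, Finset.sum_pow]
  simp only [powCoeff, Sym.val_eq_coe, Multiset.prod_map_mul, torusChar_multiset_sum, mul_assoc]

lemma integral_trigPoly_pow_mul_conj_pow_mul_conj_torusChar (F : Finset (Fin d → ℤ))
    (a : (Fin d → ℤ) → ℂ) (k l : ℕ) (lam : Fin d → ℤ) :
    ∫ x : Torus d, trigPoly F a x ^ k * conj (trigPoly F a x ^ l) * conj (torusChar lam x) =
      ∑ P ∈ F.sym k, ∑ Q ∈ F.sym l, powCoeff a P.toMultiset * conj (powCoeff a Q.toMultiset) *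
        if P.toMultiset.sum - Q.toMultiset.sum = lam then 1 else 0 := by
  simp only [trigPoly_pow, map_sum, Finset.sum_mul_sum]
  simp only [Finset.sum_mul]
  rw [integral_finsetSum _ fun P _ => integrable_of_continuous (by fun_prop)]
  refine Finset.sum_congr rfl fun P _ => ?_
  rw [integral_finsetSum _ fun Q _ => integrable_of_continuous (by fun_prop)]
  refine Finset.sum_congr rfl fun Q _ => ?_
  simp only [← sub_eq_zero (b := lam), ← integral_torusChar, ← integral_const_mul, torusChar_sub,
    map_mul]
  congr with x
  ring

lemma norm_pow_mul_inner_eq_re (z w : ℂ) (n : ℕ) :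
    ‖z‖ ^ (2 * n) * ⟪z, w⟫_ℝ = (z ^ (n + 1) * conj (z ^ n) * conj w).re := by
  have : z ^ (n + 1) * conj (z ^ n) * conj w = (‖z‖ ^ (2 * n) : ℝ) * (z * conj w) := by
    rw [pow_mul, ← Complex.normSq_eq_norm_sq, Complex.ofReal_pow, ← Complex.mul_conj, map_pow]
    ring
  rw [this, Complex.re_ofReal_mul, real_inner_comm, Complex.inner, mul_comm z]

lemma integral_norm_pow_mul_inner_trigPoly {f : Torus d → ℂ} (hf : Continuous f) (n : ℕ)
    (F : Finset (Fin d → ℤ)) (a : (Fin d → ℤ) → ℂ) :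
    ∫ x, ‖f x‖ ^ (2 * n) * ⟪f x, trigPoly F a x⟫_ℝ =
      ∑ α ∈ F, (conj (a α) * ∫ x, f x ^ (n + 1) * conj (f x ^ n) * conj (torusChar α x)).re := by
  simp only [norm_pow_mul_inner_eq_re, trigPoly, map_sum, Finset.mul_sum, Complex.re_sum]
  rw [integral_finsetSum _ fun α _ => integrable_of_continuous (by fun_prop)]
  refine Finset.sum_congr rfl fun α _ => ?_
  have hint : Integrable fun x => conj (a α) * (f x ^ (n + 1) * conj (f x ^ n) *
      conj (torusChar α x)) := integrable_of_continuous (by fun_prop)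
  rw [← integral_const_mul]
  refine Eq.trans ?_ (integral_re hint)
  simp only [map_mul, RCLike.re_to_complex]
  congr with x
  ring_nf

lemma integral_norm_pow_mul_inner_trigPoly_eq_zero {F G : Finset (Fin d → ℤ)} {n : ℕ}
    (h : Disjoint (G : Set (Fin d → ℤ)) (diffSumset (n + 1) n F)) (a b : (Fin d → ℤ) → ℂ) :
    ∫ x, ‖trigPoly F a x‖ ^ (2 * n) * ⟪trigPoly F a x, trigPoly G b x⟫_ℝ = 0 := by
  rw [integral_norm_pow_mul_inner_trigPoly (by fun_prop)]
  refine Finset.sum_eq_zero fun lam hlam => ?_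
  rw [integral_trigPoly_pow_mul_conj_pow_mul_conj_torusChar, Finset.sum_eq_zero, mul_zero,
    Complex.zero_re]
  refine fun P hP => Finset.sum_eq_zero fun Q hQ => ?_
  rw [if_neg, mul_zero]
  exact fun hPQ => h.notMem_of_mem_left hlam
    ⟨P, Q, Finset.mem_sym_iff.1 hP, Finset.mem_sym_iff.1 hQ, hPQ⟩

open scoped ComplexOrder in
lemma powCoeff_one_pos (P : Multiset (Fin d → ℤ)) : 0 < powCoeff 1 P := by
  have : 0 < P.countPerms := Nat.multinomial_pos _ _
  simpa [powCoeff]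

open scoped ComplexOrder in
lemma integral_norm_pow_mul_inner_trigPoly_one_pos {F : Finset (Fin d → ℤ)} {n : ℕ}
    {lam : Fin d → ℤ} (h : lam ∈ diffSumset (n + 1) n F) :
    0 < ∫ x, ‖trigPoly F 1 x‖ ^ (2 * n) * ⟪trigPoly F 1 x, trigPoly {lam} 1 x⟫_ℝ := by
  obtain ⟨P, Q, hP, hQ, hPQ⟩ := h
  rw [integral_norm_pow_mul_inner_trigPoly (by fun_prop), Finset.sum_singleton,
    integral_trigPoly_pow_mul_conj_pow_mul_conj_torusChar, Pi.one_apply, map_one, one_mul]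
  have pos (P Q : Multiset (Fin d → ℤ)) : 0 < powCoeff 1 P * conj (powCoeff 1 Q) :=
    mul_pos (powCoeff_one_pos P) (star_pos_iff.2 (powCoeff_one_pos Q))
  have nonneg (P : Sym (Fin d → ℤ) (n + 1)) (Q : Sym (Fin d → ℤ) n) :
      0 ≤ powCoeff 1 P.toMultiset * conj (powCoeff 1 Q.toMultiset) *
        if P.toMultiset.sum - Q.toMultiset.sum = lam then 1 else 0 :=
    mul_nonneg (pos _ _).le (by split_ifs <;> simp)
  have pos_P : 0 < ∑ Q ∈ F.sym n, powCoeff 1 P.toMultiset * conj (powCoeff 1 Q.toMultiset) *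
      if P.toMultiset.sum - Q.toMultiset.sum = lam then 1 else 0 :=
    Finset.sum_pos' (fun Q _ => nonneg P Q)
      ⟨Q, Finset.mem_sym_iff.2 hQ, by simpa only [if_pos hPQ, mul_one] using pos _ _⟩
  refine (Complex.pos_iff.1 (?_ : (0 : ℂ) < ∑ P ∈ F.sym (n + 1), ∑ Q ∈ F.sym n, _)).1
  exact Finset.sum_pos' (fun P _ => Finset.sum_nonneg fun Q _ => nonneg P Q)
    ⟨P, Finset.mem_sym_iff.2 hP, pos_P⟩

end Fourier

section Contractivity

open scoped InnerProductSpace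

variable {d : ℕ} {Γ : Set (Fin d → ℤ)}

lemma isContractiveHp_iff_eLpNorm_le_add {p : ℝ≥0∞} (hΓ : Γ ⊆ NN d) :
    IsContractiveHp d p Γ ↔ ∀ F G : Finset (Fin d → ℤ), ↑F ⊆ Γ → ↑G ⊆ NN d \ Γ →
      ∀ a b : (Fin d → ℤ) → ℂ,
        eLpNorm (trigPoly F a) p volume ≤ eLpNorm (trigPoly F a + trigPoly G b) p volume := by
  constructor
  · intro h F G hF hG a b
    have hFG : Disjoint F G :=
      Finset.disjoint_left.2 fun α hαF hαG => (hG hαG).2 (hF hαF)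
    have filter_union : (F ∪ G).filter (· ∈ Γ) = F := by
      rw [Finset.filter_union, Finset.filter_true_of_mem fun α hα => hF hα,
        Finset.filter_false_of_mem fun α hα => (hG hα).2, Finset.union_empty]
    have hNN : ↑(F ∪ G) ⊆ NN d := by
      rw [Finset.coe_union]
      exact Set.union_subset (hF.trans hΓ) (hG.trans Set.sdiff_subset)
    have contraction := h (F ∪ G) hNN (F.piecewise a b)
    rwa [filter_union, trigPoly_union hFG,
      trigPoly_congr fun α hα => F.piecewise_eq_of_mem a b hα,
      trigPoly_congr fun α hα => F.piecewise_eq_of_notMem a b (Finset.disjoint_right.1 hFG hα)]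
      at contraction
  · intro h F hF a
    have split := trigPoly_union (Finset.disjoint_filter_filter_not F F (· ∈ Γ)) a
    rw [Finset.filter_union_filter_not_eq] at split
    rw [split]
    exact h _ _ (fun α hα => (Finset.mem_filter.1 hα).2)
      (fun α hα => ⟨hF (Finset.mem_filter.1 hα).1, (Finset.mem_filter.1 hα).2⟩) a a

lemma isContractiveHp_iff_integral_eq_zero (hΓ : Γ ⊆ NN d) (n : ℕ) :
    IsContractiveHp d (2 * (n + 1)) Γ ↔ ∀ F G : Finset (Fin d → ℤ), ↑F ⊆ Γ → ↑G ⊆ NN d \ Γ →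
      ∀ a b : (Fin d → ℤ) → ℂ,
        ∫ x, ‖trigPoly F a x‖ ^ (2 * n) * ⟪trigPoly F a x, trigPoly G b x⟫_ℝ = 0 := by
  have exponent : (2 * (n + 1) : ℝ≥0∞) = (2 * (n + 1) : ℕ) := by push_cast; rfl
  have norm_le_iff (F G : Finset (Fin d → ℤ)) (a b : (Fin d → ℤ) → ℂ) :=
    eLpNorm_natCast_le_iff (μ := volume) (k := 2 * (n + 1)) (by lia)
      (memLp_of_continuous (continuous_trigPoly F a))
      (memLp_of_continuous ((continuous_trigPoly F a).add (continuous_trigPoly G b)))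
  have orthogonal_iff (F G : Finset (Fin d → ℤ)) (a b : (Fin d → ℤ) → ℂ) :=
    forall_integral_norm_pow_le_iff (μ := volume) (continuous_trigPoly F a)
      (continuous_trigPoly G b) n
  simp only [isContractiveHp_iff_eLpNorm_le_add hΓ, exponent, norm_le_iff, ← orthogonal_iff,
    Pi.add_apply]
  constructor
  · intro h F G hF hG a b ε
    simpa only [trigPoly_smul, Pi.smul_apply] using h F G hF hG a (ε • b)
  · intro h F G hF hG a b
    simpa only [one_smul] using h F G hF hG a b 1

lemma isContractiveHp_iff_diffSumset_inter_NN_subset (hΓ : Γ ⊆ NN d) (n : ℕ) :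
    IsContractiveHp d (2 * (n + 1)) Γ ↔ diffSumset (n + 1) n Γ ∩ NN d ⊆ Γ := by
  rw [isContractiveHp_iff_integral_eq_zero hΓ]
  constructor
  · rintro h lam ⟨hlam, hNN⟩
    obtain ⟨F, hF, hlamF⟩ := exists_finset_mem_diffSumset hlam
    by_contra hlamΓ
    exact (integral_norm_pow_mul_inner_trigPoly_one_pos hlamF).ne'
      (h F {lam} hF (by simpa using ⟨hNN, hlamΓ⟩) 1 1)
  · intro h F G hF hG a b
    refine integral_norm_pow_mul_inner_trigPoly_eq_zero (Set.disjoint_left.2 ?_) a b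
    exact fun lam hlam hlamF => (hG hlam).2 (h ⟨diffSumset_mono hF hlamF, (hG hlam).1⟩)

end Contractivity

/-- Theorem 3: `Γ ⊆ ℕ₀^d` is a contractive projection set for `H^{2(n+1)}(𝕋^d)`
iff `E_n(Γ) = Γ`. -/
theorem contractive_iff_n_extension (d : ℕ) (hd : 1 ≤ d) (n : ℕ)
    (Γ : Set (Fin d → ℤ)) (hne : Γ.Nonempty) (hΓ : Γ ⊆ NN d) :
    IsContractiveHp d (2 * ((n : ℝ≥0∞) + 1)) Γ ↔ Eext n Γ = Γ := by
  have subset_Eext : Γ ⊆ diffSumset (n + 1) n Γ ∩ NN d :=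
    Set.subset_inter (subset_diffSumset_succ n Γ) hΓ
  rw [isContractiveHp_iff_diffSumset_inter_NN_subset hΓ, Eext_eq_diffSumset_inter_NN]
  exact ⟨fun h => h.antisymm subset_Eext, fun h => h.subset⟩

end
end

section
/- Fix an integer n ≥ 1. There exists a ℂ-linear map T from the space of analytic polynomials on 𝕋^∞ to itself such that for every 1 ≤ p ≤ ∞ the following holds: there exists a constant C ≥ 0 with ‖Tf‖_p ≤ C‖f‖_p for all analytic polynomials f on 𝕋^∞ if and only if p ∈ {2, 4, ..., 2(n+1)}. -/
open MeasureTheory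
open scoped ENNReal NNReal

noncomputable section

/-- The infinite-dimensional torus `𝕋^∞`, modelled as a countable product of `ℝ/ℤ`. -/
abbrev TorusInf := ℕ → AddCircle (1 : ℝ)

/-- The Haar probability measure `m_∞` on the infinite-dimensional torus. -/
def haarTorusInf : Measure TorusInf :=
  Measure.addHaarMeasure (⊤ : TopologicalSpace.PositiveCompacts TorusInf)

/-- Evaluation of an analytic polynomial on `𝕋^∞`, given by its finitely supported
family of coefficients `c` indexed by multi-indices `α ∈ ℕ₀^{(∞)}`, as the function
`z ↦ ∑_α c_α z^α`. -/
def evalAPoly (c : (ℕ →₀ ℕ) →₀ ℂ) (z : TorusInf) : ℂ :=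
  ∑ α ∈ c.support, c α * ∏ j ∈ α.support, fourier ((α j : ℤ)) (z j)

/-!
Let `T` be the projection onto the frequencies in a set `Λ`. If `Λ` contains every frequency of
the form `λ₀ + ⋯ + λₘ - μ₁ - ⋯ - μₘ` with `λᵢ, μᵢ ∈ Λ`, then `f - T f` is orthogonal to
`|T f|²ᵐ T f`, and convexity of `|·|²ᵐ⁺²` makes `T` a contraction for `p = 2 (m + 1)`. In `n + 2`
variables, the frequencies of `y₀ ⋯ yₙ₊₁` and of `y₁ⁿ⁺², …, yₙ₊₁ⁿ⁺²` have this property for `m ≤ n`.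

For other finite `p`, divide by the first monomial: `T` maps `1 + x S + ε q` to `1 + x S`, where
`S` is a sum of `n + 1` unimodular functions and `q` is the inverse of their product. The derivative
in `ε` at `0` of the integral of `|1 + x S + ε q| ^ p` is a nonzero multiple of
`binom (p / 2 - 1) (n + 1) xⁿ⁺¹` up to a term of order `xⁿ⁺²`, so that `T` is not a contraction.
For `p = ∞`, take `x = 1`: where `|1 + S|` is maximal, `S = n + 1` and `q = 1`, so that a small
`ε < 0` lowers the norm. Taking tensor powers turns a norm larger than `1` into unboundedness.
-/

section

open scoped Pointwise ComplexConjugate RealInnerProductSpace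
open Filter Topology

instance isProbabilityMeasure_volume_unitAddCircle :
    IsProbabilityMeasure (volume : Measure UnitAddCircle) :=
  ⟨by simp [AddCircle.measure_univ]⟩

instance isAddHaarMeasure_haarTorusInf : haarTorusInf.IsAddHaarMeasure :=
  inferInstanceAs (Measure.addHaarMeasure _).IsAddHaarMeasure

instance isProbabilityMeasure_haarTorusInf : IsProbabilityMeasure haarTorusInf :=
  ⟨Measure.addHaarMeasure_self⟩

theorem exists_fourier_eq_neg_one {m : ℤ} (hm : m ≠ 0) :
    ∃ t : UnitAddCircle, fourier m t = (-1 : ℂ) :=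
  ⟨((1 / 2 / m : ℝ) : UnitAddCircle), by
    simpa using fourier_add_half_inv_index (T := (1 : ℝ)) hm zero_lt_one 0⟩

theorem integral_eq_zero_of_add_right_eq_mul {G : Type*} [AddGroup G] [MeasurableSpace G]
    [MeasurableAdd G] {μ : Measure G} [μ.IsAddRightInvariant] {f : G → ℂ} {c : ℂ} (hc : c ≠ 1)
    (a : G) (h : ∀ y, f (y + a) = c * f y) : ∫ y, f y ∂μ = 0 := by
  have hinv := integral_add_right_eq_self (μ := μ) f a
  simp only [h, integral_const_mul] at hinv
  exact (mul_left_eq_self₀.1 hinv).resolve_left hc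

section Monomial

variable {ι κ : Type*}

/-- The analytic monomial `z ↦ z ^ α` on the torus `(ℝ/ℤ)^ι`, for a multi-index `α`. -/
def torusMonomial (α : ι →₀ ℕ) : C(ι → UnitAddCircle, ℂ) where
  toFun z := α.prod fun j k => fourier (k : ℤ) (z j)
  continuous_toFun := continuous_finsetProd _ fun j _ => by fun_prop

theorem torusMonomial_apply (α : ι →₀ ℕ) (z : ι → UnitAddCircle) :
    torusMonomial α z = α.prod fun j k => (fourier (k : ℤ) (z j) : ℂ) := rfl

theorem torusMonomial_zero : torusMonomial (0 : ι →₀ ℕ) = 1 := by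
  ext; simp [torusMonomial_apply]

theorem torusMonomial_add (α β : ι →₀ ℕ) :
    torusMonomial (α + β) = torusMonomial α * torusMonomial β := by
  classical
  ext z
  simp only [torusMonomial_apply, ContinuousMap.mul_apply]
  exact Finsupp.prod_add_index' (by simp) (by simp)

theorem torusMonomial_sum {I : Type*} (s : Finset I) (α : I → ι →₀ ℕ) :
    torusMonomial (∑ i ∈ s, α i) = ∏ i ∈ s, torusMonomial (α i) := by
  classical
  induction s using Finset.induction_on with
  | empty => simp [torusMonomial_zero]
  | insert i s hi ih => rw [Finset.sum_insert hi, Finset.prod_insert hi, torusMonomial_add, ih]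

theorem norm_torusMonomial (α : ι →₀ ℕ) (z : ι → UnitAddCircle) : ‖torusMonomial α z‖ = 1 := by
  simp only [torusMonomial_apply, Finsupp.prod, norm_prod, fourier_apply, Circle.norm_coe,
    Finset.prod_const_one]

theorem torusMonomial_apply_add (α : ι →₀ ℕ) (z t : ι → UnitAddCircle) :
    torusMonomial α (z + t) = torusMonomial α z * torusMonomial α t := by
  simp [torusMonomial_apply, fourier_apply, smul_add, AddCircle.toCircle_add]

theorem torusMonomial_apply_single [DecidableEq ι] (α : ι →₀ ℕ) (j : ι) (t : UnitAddCircle) :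
    torusMonomial α (Pi.single j t) = fourier (α j : ℤ) t := by
  rw [torusMonomial_apply, Finsupp.prod_eq_single j]
  · simp
  · intro i _ hij
    simp [Pi.single_eq_of_ne hij]
  · simp

theorem torusMonomial_mapDomain (φ : κ → ι) (α : κ →₀ ℕ) (z : ι → UnitAddCircle) :
    torusMonomial (α.mapDomain φ) z = torusMonomial α (z ∘ φ) := by
  classical
  simp only [torusMonomial_apply, Function.comp_apply]
  exact Finsupp.prod_mapDomain_index (by simp) (by simp)

/-- The polynomial function on the torus `(ℝ/ℤ)^ι` with the given family of coefficients. -/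
def torusPoly : ((ι →₀ ℕ) →₀ ℂ) →ₗ[ℂ] C(ι → UnitAddCircle, ℂ) :=
  Finsupp.linearCombination ℂ torusMonomial

theorem torusPoly_apply (c : (ι →₀ ℕ) →₀ ℂ) (z : ι → UnitAddCircle) :
    torusPoly c z = ∑ α ∈ c.support, c α * torusMonomial α z := by
  simp [torusPoly, Finsupp.linearCombination_apply, Finsupp.sum]

theorem torusPoly_single (α : ι →₀ ℕ) (a : ℂ) :
    torusPoly (Finsupp.single α a) = a • torusMonomial α :=
  Finsupp.linearCombination_single ..

theorem evalAPoly_eq_torusPoly (c : (ℕ →₀ ℕ) →₀ ℂ) : evalAPoly c = torusPoly c :=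
  funext fun z => (torusPoly_apply c z).symm

theorem integral_torusMonomial_mul_conj [Countable ι] [DecidableEq ι]
    (μ : Measure (ι → UnitAddCircle)) [IsProbabilityMeasure μ] [μ.IsAddRightInvariant]
    (α β : ι →₀ ℕ) :
    ∫ z, torusMonomial α z * conj (torusMonomial β z) ∂μ = if α = β then 1 else 0 := by
  split_ifs with h
  · simp [h, Complex.mul_conj, Complex.normSq_eq_norm_sq, norm_torusMonomial]
  · obtain ⟨j, hj⟩ := DFunLike.ne_iff.1 h
    obtain ⟨t, ht⟩ := exists_fourier_eq_neg_one (m := (α j : ℤ) + -(β j : ℤ)) (by omega)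
    refine integral_eq_zero_of_add_right_eq_mul (c := -1) (by norm_num) (Pi.single j t) fun z => ?_
    rw [torusMonomial_apply_add, torusMonomial_apply_add, torusMonomial_apply_single,
      torusMonomial_apply_single, map_mul, ← ht, fourier_add, fourier_neg]
    ring

/-- The polynomials on the torus whose frequencies lie in `Λ`. -/
def trigSpan (Λ : Set (ι →₀ ℕ)) : Submodule ℂ C(ι → UnitAddCircle, ℂ) :=
  Submodule.span ℂ (torusMonomial '' Λ)

theorem trigSpan_add (Λ Λ' : Set (ι →₀ ℕ)) : trigSpan (Λ + Λ') = trigSpan Λ * trigSpan Λ' := by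
  rw [trigSpan, trigSpan, trigSpan, Submodule.span_mul_span]
  exact congrArg _ (Set.image_image2_distrib torusMonomial_add)

theorem pow_mem_trigSpan {Λ : Set (ι →₀ ℕ)} {f : C(ι → UnitAddCircle, ℂ)} (hf : f ∈ trigSpan Λ)
    (m : ℕ) : f ^ m ∈ trigSpan (m • Λ) := by
  induction m with
  | zero =>
    rw [pow_zero, zero_smul, ← torusMonomial_zero]
    exact Submodule.subset_span ⟨0, rfl, rfl⟩
  | succ m ih =>
    rw [pow_succ, succ_nsmul, trigSpan_add]
    exact Submodule.mul_mem_mul ih hf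

theorem torusPoly_mem_trigSpan {Λ : Set (ι →₀ ℕ)} {c : (ι →₀ ℕ) →₀ ℂ}
    (hc : c ∈ Finsupp.supported ℂ ℂ Λ) : torusPoly c ∈ trigSpan Λ :=
  Finsupp.mem_span_image_iff_linearCombination ℂ |>.2 ⟨c, hc, rfl⟩

theorem integrable_of_continuous_s5 {X E : Type*} [TopologicalSpace X] [CompactSpace X]
    [MeasurableSpace X] [OpensMeasurableSpace X] [NormedAddCommGroup E]
    [SecondCountableTopologyEither X E] {μ : Measure X} [IsFiniteMeasure μ] {f : X → E}
    (hf : Continuous f) : Integrable f μ :=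
  hf.integrable_of_hasCompactSupport (.of_compactSpace f)

theorem integral_mul_conj_eq_zero_of_disjoint [Countable ι] (μ : Measure (ι → UnitAddCircle))
    [IsProbabilityMeasure μ] [μ.IsAddRightInvariant] {Λ Λ' : Set (ι →₀ ℕ)} (h : Disjoint Λ Λ')
    {f g : C(ι → UnitAddCircle, ℂ)} (hf : f ∈ trigSpan Λ) (hg : g ∈ trigSpan Λ') :
    ∫ z, f z * conj (g z) ∂μ = 0 := by
  classical
  have integrable_mul (u v : C(ι → UnitAddCircle, ℂ)) : Integrable (fun z => u z * conj (v z)) μ :=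
    integrable_of_continuous_s5 (by fun_prop)
  induction hf, hg using Submodule.span_induction₂ with
  | mem_mem f g hf hg =>
    obtain ⟨α, hα, rfl⟩ := hf
    obtain ⟨β, hβ, rfl⟩ := hg
    rw [integral_torusMonomial_mul_conj, if_neg (h.ne_of_mem hα hβ)]
  | zero_left => simp
  | zero_right => simp
  | add_left f f' g _ _ _ h h' =>
    simp only [ContinuousMap.add_apply, add_mul]
    rw [integral_add (integrable_mul f g) (integrable_mul f' g), h, h', add_zero]
  | add_right f g g' _ _ _ h h' =>
    simp only [ContinuousMap.add_apply, map_add, mul_add]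
    rw [integral_add (integrable_mul f g) (integrable_mul f g'), h, h', add_zero]
  | smul_left a f g _ _ h =>
    simp only [ContinuousMap.smul_apply, smul_eq_mul, mul_assoc]
    rw [integral_const_mul, h, mul_zero]
  | smul_right a f g _ _ h =>
    simp only [ContinuousMap.smul_apply, smul_eq_mul, map_mul, mul_left_comm _ (conj a)]
    rw [integral_const_mul, h, mul_zero]

end Monomial

section FrequencyProjection

variable {M : Type*}

open scoped Classical in
/-- The frequency projection onto `Λ`: keep the coefficients indexed by `Λ`, drop the others. -/
def freqProj (Λ : Set M) : (M →₀ ℂ) →ₗ[ℂ] (M →₀ ℂ) :=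
  (Finsupp.supported ℂ ℂ Λ).subtype ∘ₗ Finsupp.restrictDom ℂ ℂ Λ

theorem freqProj_mem_supported (Λ : Set M) (c : M →₀ ℂ) :
    freqProj Λ c ∈ Finsupp.supported ℂ ℂ Λ := Subtype.property _

theorem freqProj_apply_of_mem {Λ : Set M} {α : M} (hα : α ∈ Λ) (c : M →₀ ℂ) :
    freqProj Λ c α = c α := by
  classical exact Finsupp.filter_apply_pos _ _ hα

theorem freqProj_single_of_mem {Λ : Set M} {α : M} (hα : α ∈ Λ) (a : ℂ) :
    freqProj Λ (Finsupp.single α a) = Finsupp.single α a := by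
  classical exact Finsupp.filter_single_of_pos _ hα

theorem freqProj_single_of_notMem {Λ : Set M} {α : M} (hα : α ∉ Λ) (a : ℂ) :
    freqProj Λ (Finsupp.single α a) = 0 := by
  classical exact Finsupp.filter_single_of_neg _ hα

theorem sub_freqProj_mem_supported (Λ : Set M) (c : M →₀ ℂ) :
    c - freqProj Λ c ∈ Finsupp.supported ℂ ℂ Λᶜ := by
  rw [Finsupp.mem_supported']
  intro α hα
  rw [Finsupp.sub_apply, freqProj_apply_of_mem (not_not.1 hα), sub_self]

/-- Closure of `Λ` under the differences `λ₀ + ⋯ + λₘ - μ₁ - ⋯ - μₘ` of its elements, for all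
`m ≤ n`. -/
def DifferenceClosed [AddCommMonoid M] (n : ℕ) (Λ : Set M) : Prop :=
  ∀ m ≤ n, ∀ α : M, ∀ κ ∈ m • Λ, α + κ ∈ (m + 1) • Λ → α ∈ Λ

theorem DifferenceClosed.disjoint [AddCommMonoid M] {n m : ℕ} {Λ : Set M}
    (h : DifferenceClosed n Λ) (hm : m ≤ n) : Disjoint (Λᶜ + m • Λ) ((m + 1) • Λ) := by
  rw [Set.disjoint_left]
  rintro _ ⟨α, hα, κ, hκ, rfl⟩ hακ
  exact hα (h m hm α κ hκ hακ)

theorem norm_pow_add_re_le_norm_pow (m : ℕ) (a b : ℂ) :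
    ‖b‖ ^ (2 * (m + 1)) + (2 * (m + 1) : ℕ) * ((a - b) * b ^ m * conj (b ^ (m + 1))).re ≤
      ‖a‖ ^ (2 * (m + 1)) := by
  have hre : ((a - b) * b ^ m * conj (b ^ (m + 1))).re ≤ ‖b‖ ^ (2 * m + 1) * (‖a‖ - ‖b‖) := by
    have hb : b * b ^ m * conj (b ^ (m + 1)) = (‖b‖ ^ (2 * (m + 1)) : ℝ) := by
      rw [← pow_succ', Complex.mul_conj, Complex.normSq_eq_norm_sq, norm_pow]
      push_cast
      ring
    have ha : (a * b ^ m * conj (b ^ (m + 1))).re ≤ ‖a‖ * ‖b‖ ^ (2 * m + 1) := by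
      refine (Complex.re_le_norm _).trans_eq ?_
      simp only [norm_mul, norm_pow, RCLike.norm_conj]
      ring
    rw [sub_mul, sub_mul, hb, Complex.sub_re, Complex.ofReal_re]
    linear_combination ha
  have htangent := pow_add_mul_le_add_pow (norm_nonneg b)
    (by linarith [norm_nonneg a, norm_nonneg b] : 0 ≤ 2 * ‖b‖ + (‖a‖ - ‖b‖)) (2 * (m + 1))
  rw [add_sub_cancel, mul_assoc, show 2 * (m + 1) - 1 = 2 * m + 1 by omega] at htangent
  exact (by gcongr : _ ≤ _).trans htangent

variable {ι : Type*} [Countable ι] (μ : Measure (ι → UnitAddCircle)) [IsProbabilityMeasure μ]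
  [μ.IsAddRightInvariant]

-- As `∫ (f - g) gᵐ conj (gᵐ⁺¹) = 0`, the linear term of the tangent-line inequality
-- integrates to `0`.
theorem DifferenceClosed.integral_norm_freqProj_pow_le {n m : ℕ} {Λ : Set (ι →₀ ℕ)}
    (h : DifferenceClosed n Λ) (hm : m ≤ n) (c : (ι →₀ ℕ) →₀ ℂ) :
    ∫ z, ‖torusPoly (freqProj Λ c) z‖ ^ (2 * (m + 1)) ∂μ ≤
      ∫ z, ‖torusPoly c z‖ ^ (2 * (m + 1)) ∂μ := by
  set f := torusPoly c
  set g := torusPoly (freqProj Λ c)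
  have hg : g ∈ trigSpan Λ := torusPoly_mem_trigSpan (freqProj_mem_supported Λ c)
  have hfg : f - g ∈ trigSpan Λᶜ := by
    rw [← map_sub]
    exact torusPoly_mem_trigSpan (sub_freqProj_mem_supported Λ c)
  have orthogonality : ∫ z, ((f - g) * g ^ m) z * conj ((g ^ (m + 1)) z) ∂μ = 0 :=
    integral_mul_conj_eq_zero_of_disjoint μ (h.disjoint hm)
      (trigSpan_add (Λᶜ) (m • Λ) ▸ Submodule.mul_mem_mul hfg (pow_mem_trigSpan hg m))
      (pow_mem_trigSpan hg (m + 1))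
  have hint : Integrable (fun z => ((f - g) * g ^ m) z * conj ((g ^ (m + 1)) z)) μ :=
    integrable_of_continuous_s5 (by fun_prop)
  have hre : ∫ z, (((f - g) * g ^ m) z * conj ((g ^ (m + 1)) z)).re ∂μ = 0 := by
    rw [← Complex.zero_re, ← orthogonality]
    exact integral_re hint
  calc ∫ z, ‖g z‖ ^ (2 * (m + 1)) ∂μ
      = ∫ z, ‖g z‖ ^ (2 * (m + 1)) +
          (2 * (m + 1) : ℕ) * (((f - g) * g ^ m) z * conj ((g ^ (m + 1)) z)).re ∂μ := by
        rw [integral_add (integrable_of_continuous_s5 (by fun_prop))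
          (integrable_of_continuous_s5 (by fun_prop)), integral_const_mul, hre, mul_zero, add_zero]
    _ ≤ ∫ z, ‖f z‖ ^ (2 * (m + 1)) ∂μ :=
        integral_mono (integrable_of_continuous_s5 (by fun_prop))
          (integrable_of_continuous_s5 (by fun_prop))
          fun z => norm_pow_add_re_le_norm_pow m (f z) (g z)

theorem eLpNorm_eq_integral_rpow_norm_of_continuous {X E : Type*} [TopologicalSpace X]
    [CompactSpace X] [MeasurableSpace X] [OpensMeasurableSpace X] [NormedAddCommGroup E]
    {μ : Measure X} [IsFiniteMeasure μ] {f : X → E} (hf : Continuous f) {p : ℝ≥0∞} (hp : p ≠ 0)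
    (hp' : p ≠ ∞) :
    eLpNorm f p μ = ENNReal.ofReal ((∫ x, ‖f x‖ ^ p.toReal ∂μ) ^ p.toReal⁻¹) :=
  (hf.memLp_of_hasCompactSupport (.of_compactSpace f)).eLpNorm_eq_integral_rpow_norm hp hp'

theorem DifferenceClosed.eLpNorm_freqProj_le {n m : ℕ} {Λ : Set (ι →₀ ℕ)}
    (h : DifferenceClosed n Λ) (hm : m ≤ n) (c : (ι →₀ ℕ) →₀ ℂ) :
    eLpNorm (torusPoly (freqProj Λ c)) (2 * (m + 1 : ℕ)) μ ≤
      eLpNorm (torusPoly c) (2 * (m + 1 : ℕ)) μ := by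
  have hp : (2 * (m + 1 : ℕ) : ℝ≥0∞) ≠ 0 := by simp
  have hp' : (2 * (m + 1 : ℕ) : ℝ≥0∞) ≠ ∞ := by finiteness
  have hreal : (2 * (m + 1 : ℕ) : ℝ≥0∞).toReal = (2 * (m + 1) : ℕ) := by
    rw [ENNReal.toReal_mul, ENNReal.toReal_natCast]
    norm_num
  rw [eLpNorm_eq_integral_rpow_norm_of_continuous (map_continuous _) hp hp',
    eLpNorm_eq_integral_rpow_norm_of_continuous (map_continuous _) hp hp', hreal]
  simp only [Real.rpow_natCast]
  refine ENNReal.ofReal_le_ofReal (Real.rpow_le_rpow ?_ ?_ (by positivity))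
  · exact integral_nonneg fun z => by positivity
  · exact h.integral_norm_freqProj_pow_le μ hm c

end FrequencyProjection

section Spectrum

theorem nsmul_set_induction {M : Type*} [AddMonoid M] {S : Set M} {P : ℕ → M → Prop}
    (zero : P 0 0) (add : ∀ m κ, P m κ → ∀ s ∈ S, P (m + 1) (κ + s)) :
    ∀ m, ∀ κ ∈ m • S, P m κ
  | 0, κ, hκ => by
    rw [zero_smul, Set.mem_zero] at hκ
    exact hκ ▸ zero
  | m + 1, κ, hκ => by
    rw [succ_nsmul] at hκ
    obtain ⟨κ', hκ', s, hs, rfl⟩ := hκ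
    exact add m κ' (nsmul_set_induction zero add m κ' hκ') s hs

theorem map_eq_nsmul_of_mem_nsmul {M N : Type*} [AddMonoid M] [AddMonoid N] {S : Set M}
    (f : M →+ N) {D : N} (hf : ∀ s ∈ S, f s = D) {m : ℕ} {κ : M} (hκ : κ ∈ m • S) :
    f κ = m • D :=
  nsmul_set_induction (P := fun m κ => f κ = m • D) (by simp)
    (fun m κ h s hs => by rw [map_add, h, hf s hs, succ_nsmul]) m κ hκ

/-- The blocks of variables: `N + 1` of them at each level `N`. -/
abbrev BlockIndex : Type := Σ N : ℕ, Fin (N + 1)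

variable (d : ℕ) [NeZero d]

/-- A partition of the variables of `𝕋^∞` into blocks of `d` variables indexed by `BlockIndex`. -/
def blockVariable : BlockIndex × Fin d ≃ ℕ := Classical.choice nonempty_equiv_of_countable

variable {d}

theorem blockVariable_mk_injective (b : BlockIndex) :
    Function.Injective fun r : Fin d => blockVariable d (b, r) :=
  (blockVariable d).injective.comp (Prod.mk_right_injective b)

/-- The restriction of a multi-index to a block. -/
def block (b : BlockIndex) : (ℕ →₀ ℕ) →+ (Fin d →₀ ℕ) :=
  Finsupp.comapDomain.addMonoidHom (blockVariable_mk_injective b)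

/-- The multi-indices which lie in `S` on each block of some level `N` and vanish on the blocks of
all other levels, the two cases being `1 • S = S` and `0 • S = {0}`. -/
def tensorSpectrum (S : Set (Fin d →₀ ℕ)) : Set (ℕ →₀ ℕ) :=
  {α | ∃ N, ∀ b : BlockIndex, block b α ∈ Finsupp.single N 1 b.1 • S}

variable {S : Set (Fin d →₀ ℕ)}

theorem exists_block_mem_nsmul_of_mem_nsmul_tensorSpectrum {m : ℕ} {κ : ℕ →₀ ℕ}
    (hκ : κ ∈ m • tensorSpectrum S) :
    ∃ a : ℕ →₀ ℕ, a.degree = m ∧ ∀ b : BlockIndex, block b κ ∈ a b.1 • S := by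
  refine nsmul_set_induction (P := fun m κ => ∃ a : ℕ →₀ ℕ, a.degree = m ∧
    ∀ b : BlockIndex, block b κ ∈ a b.1 • S) ⟨0, by simp⟩ ?_ m κ hκ
  rintro m κ ⟨a, ha, hκ⟩ α ⟨N, hα⟩
  refine ⟨a + Finsupp.single N 1, by simp [ha], fun b => ?_⟩
  rw [map_add, Finsupp.add_apply, add_nsmul]
  exact Set.add_mem_add (hκ b) (hα b)

-- Degrees determine how many of the summands of a multi-index have a given level.
theorem DifferenceClosed.tensorSpectrum {n D : ℕ} (hS : DifferenceClosed n S) (hD : 0 < D)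
    (hdeg : ∀ s ∈ S, s.degree = D) : DifferenceClosed n (tensorSpectrum S) := by
  intro m hm α κ hκ hακ
  obtain ⟨a, ha, hκ⟩ := exists_block_mem_nsmul_of_mem_nsmul_tensorSpectrum hκ
  obtain ⟨b, hb, hακ⟩ := exists_block_mem_nsmul_of_mem_nsmul_tensorSpectrum hακ
  have degree_block (B : BlockIndex) : (block (d := d) B α).degree + a B.1 * D = b B.1 * D := by
    have hα := map_eq_nsmul_of_mem_nsmul Finsupp.degree hdeg (hακ B)
    rwa [map_add, map_add, map_eq_nsmul_of_mem_nsmul Finsupp.degree hdeg (hκ B)] at hα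
  have hab : a ≤ b := fun N =>
    Nat.le_of_mul_le_mul_right (Nat.le.intro ((add_comm _ _).trans (degree_block ⟨N, 0⟩))) hD
  obtain ⟨e, rfl⟩ := exists_add_of_le hab
  obtain ⟨N, rfl⟩ : ∃ N, e = Finsupp.single N 1 := by
    rw [map_add, ha, add_right_inj] at hb
    exact (Finsupp.sum_eq_one_iff e).1 hb
  refine ⟨N, fun B => ?_⟩
  by_cases hN : B.1 = N
  · rw [hN, Finsupp.single_eq_same, one_smul]
    refine hS (a N) ((Finsupp.le_degree N a).trans (ha.trans_le hm)) _ (block B κ) (hN ▸ hκ B) ?_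
    simpa [hN] using hακ B
  · have h0 := degree_block B
    rw [Finsupp.add_apply, Finsupp.single_eq_of_ne hN, add_zero, Nat.add_eq_right,
      Finsupp.degree_eq_zero_iff] at h0
    simp [Finsupp.single_eq_of_ne hN, h0]

end Spectrum

section BlockSpectrum

variable {n : ℕ}

theorem eq_of_le_of_degree_le {ι : Type*} {α β : ι →₀ ℕ} (h : α ≤ β) (hdeg : β.degree ≤ α.degree) :
    α = β := by
  obtain ⟨γ, rfl⟩ := exists_add_of_le h
  rw [map_add, add_le_iff_nonpos_right, nonpos_iff_eq_zero, Finsupp.degree_eq_zero_iff] at hdeg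
  rw [hdeg, add_zero]

/-- The multi-index of the product of all variables. -/
def allOnes (n : ℕ) : Fin (n + 2) →₀ ℕ := Finsupp.equivFunOnFinite.symm 1

theorem allOnes_apply (r : Fin (n + 2)) : allOnes n r = 1 := rfl

theorem degree_allOnes : (allOnes n).degree = n + 2 := by
  simp [Finsupp.degree_eq_sum, allOnes_apply]

/-- The frequencies of `y₀ ⋯ yₙ₊₁` and of `y₁ⁿ⁺², …, yₙ₊₁ⁿ⁺²`, but not that of `y₀ⁿ⁺²`. -/
def blockSpectrum (n : ℕ) : Set (Fin (n + 2) →₀ ℕ) :=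
  insert (allOnes n) (Set.range fun k : Fin (n + 1) => Finsupp.single k.succ (n + 2))

theorem degree_of_mem_blockSpectrum {s : Fin (n + 2) →₀ ℕ} (hs : s ∈ blockSpectrum n) :
    s.degree = n + 2 := by
  obtain rfl | ⟨k, rfl⟩ := hs
  · exact degree_allOnes
  · exact Finsupp.degree_single _ _

theorem modEq_of_mem_nsmul_blockSpectrum {m : ℕ} {κ : Fin (n + 2) →₀ ℕ}
    (hκ : κ ∈ m • blockSpectrum n) (r : Fin (n + 2)) : κ r ≡ κ 0 [MOD n + 2] := by
  refine nsmul_set_induction (P := fun _ κ => κ r ≡ κ 0 [MOD n + 2]) (Nat.ModEq.refl _) ?_ m κ hκ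
  rintro - κ h s (rfl | ⟨k, rfl⟩)
  · exact h.add rfl
  · refine h.add ?_
    rw [Finsupp.single_eq_of_ne' k.succ_ne_zero, Finsupp.single_apply]
    split_ifs
    · exact Nat.modEq_zero_iff_dvd.2 dvd_rfl
    · rfl

theorem apply_zero_le_of_mem_nsmul_blockSpectrum {m : ℕ} {κ : Fin (n + 2) →₀ ℕ}
    (hκ : κ ∈ m • blockSpectrum n) : κ 0 ≤ m := by
  refine nsmul_set_induction (P := fun m κ => κ 0 ≤ m) le_rfl ?_ m κ hκ
  rintro m κ h s (rfl | ⟨k, rfl⟩)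
  · exact Nat.add_le_add h le_rfl
  · rw [Finsupp.add_apply, Finsupp.single_eq_of_ne' k.succ_ne_zero]
    exact h.trans m.le_succ

theorem mem_blockSpectrum_of_modEq {α : Fin (n + 2) →₀ ℕ} (hdeg : α.degree = n + 2)
    (h0 : α 0 < n + 2) (hmod : ∀ r, α r ≡ α 0 [MOD n + 2]) : α ∈ blockSpectrum n := by
  obtain hz | hpos := (α 0).eq_zero_or_pos
  · obtain ⟨r, hr⟩ : ∃ r, α r ≠ 0 := by
      by_contra! h
      simp [Finsupp.degree_eq_sum, h] at hdeg
    obtain ⟨k, rfl⟩ := Fin.exists_succ_eq.2 (fun h : r = 0 => hr (h ▸ hz))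
    refine Or.inr ⟨k, eq_of_le_of_degree_le ?_ (by simp [hdeg])⟩
    rw [Finsupp.single_le_iff]
    exact Nat.le_of_dvd (Nat.pos_of_ne_zero hr) ((Nat.modEq_zero_iff_dvd).1 (hz ▸ hmod k.succ))
  · refine Or.inl (eq_of_le_of_degree_le (fun r => ?_) (hdeg.trans degree_allOnes.symm).le).symm
    refine Nat.one_le_iff_ne_zero.2 fun hr => ?_
    have hdvd : n + 2 ∣ α 0 := Nat.modEq_zero_iff_dvd.1 (hr ▸ (hmod r).symm)
    exact (Nat.le_of_dvd hpos hdvd).not_gt h0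

-- The congruence and degree conditions pass to differences, and `α 0 ≤ m + 1 < n + 2`.
theorem differenceClosed_blockSpectrum (n : ℕ) : DifferenceClosed n (blockSpectrum n) := by
  intro m hm α κ hκ hακ
  have degree_eq {k : ℕ} {s} (hs : s ∈ k • blockSpectrum n) : s.degree = k * (n + 2) :=
    map_eq_nsmul_of_mem_nsmul Finsupp.degree (fun _ => degree_of_mem_blockSpectrum) hs
  refine mem_blockSpectrum_of_modEq ?_ ?_ fun r => ?_
  · have h := degree_eq hακ
    rw [map_add, degree_eq hκ] at h
    linarith
  · have h := apply_zero_le_of_mem_nsmul_blockSpectrum hακ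
    rw [Finsupp.add_apply] at h
    omega
  · exact Nat.ModEq.add_right_cancel (modEq_of_mem_nsmul_blockSpectrum hκ r)
      (modEq_of_mem_nsmul_blockSpectrum hακ r)

end BlockSpectrum

section TensorPower

variable {d : ℕ} [NeZero d] {N : ℕ}

/-- The multi-index which equals `l i` on the `i`-th block of level `N`, and vanishes on all other
blocks. -/
def assemble (N : ℕ) (l : Fin (N + 1) → Fin d →₀ ℕ) : ℕ →₀ ℕ :=
  ∑ i, (l i).mapDomain fun r => blockVariable d (⟨N, i⟩, r)

theorem block_mapDomain (b b' : BlockIndex) (v : Fin d →₀ ℕ) :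
    block b (v.mapDomain fun r => blockVariable d (b', r)) = if b = b' then v else 0 := by
  split_ifs with h
  · subst h
    exact Finsupp.comapDomain_mapDomain _ (blockVariable_mk_injective b) v
  · ext r
    refine Finsupp.mapDomain_of_notMem_range _ _ ?_
    rintro ⟨r', hr'⟩
    exact h (congrArg Prod.fst ((blockVariable d).injective hr')).symm

theorem block_assemble (l : Fin (N + 1) → Fin d →₀ ℕ) (i : Fin (N + 1)) :
    block ⟨N, i⟩ (assemble N l) = l i := by
  simp [assemble, block_mapDomain]

theorem block_assemble_of_ne (l : Fin (N + 1) → Fin d →₀ ℕ) {b : BlockIndex} (hb : b.1 ≠ N) :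
    (block b (assemble N l) : Fin d →₀ ℕ) = 0 := by
  rw [assemble, map_sum]
  refine Finset.sum_eq_zero fun i _ => ?_
  rw [block_mapDomain, if_neg fun h => hb (congrArg Sigma.fst h)]

theorem assemble_mem_tensorSpectrum_iff {S : Set (Fin d →₀ ℕ)} {l : Fin (N + 1) → Fin d →₀ ℕ}
    (hl : l 0 ≠ 0) : assemble N l ∈ tensorSpectrum S ↔ ∀ i, l i ∈ S := by
  constructor
  · rintro ⟨N', h⟩ i
    obtain rfl | hN := eq_or_ne N N'
    · simpa [block_assemble] using h ⟨N, i⟩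
    · have h0 := h ⟨N, 0⟩
      rw [block_assemble, Finsupp.single_eq_of_ne hN, zero_smul] at h0
      exact absurd h0 hl
  · refine fun h => ⟨N, ?_⟩
    rintro ⟨N', i⟩
    obtain rfl | hN := eq_or_ne N' N
    · simpa [block_assemble] using h i
    · simp [block_assemble_of_ne l (b := ⟨N', i⟩) hN, Finsupp.single_eq_of_ne hN]

/-- The coefficients of the product of `N + 1` copies of the polynomial with coefficients `c`, the
`i`-th copy being a polynomial in the variables of the `i`-th block of level `N`. -/
def tensorPower (N : ℕ) (c : (Fin d →₀ ℕ) →₀ ℂ) : (ℕ →₀ ℕ) →₀ ℂ :=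
  ∑ l ∈ Fintype.piFinset fun _ : Fin (N + 1) => c.support,
    Finsupp.single (assemble N l) (∏ i, c (l i))

theorem tensorPower_eq_sum_of_support_subset {c : (Fin d →₀ ℕ) →₀ ℂ} {s : Finset (Fin d →₀ ℕ)}
    (hs : c.support ⊆ s) :
    tensorPower N c = ∑ l ∈ Fintype.piFinset fun _ : Fin (N + 1) => s,
      Finsupp.single (assemble N l) (∏ i, c (l i)) := by
  refine Finset.sum_subset (Fintype.piFinset_subset _ _ fun _ => hs) fun l _ hl => ?_
  obtain ⟨i, hi⟩ : ∃ i, c (l i) = 0 := by simpa using hl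
  rw [Finset.prod_eq_zero (Finset.mem_univ i) hi, Finsupp.single_zero]

theorem freqProj_tensorPower (S : Set (Fin d →₀ ℕ)) {c : (Fin d →₀ ℕ) →₀ ℂ} (hc : c 0 = 0) :
    freqProj (tensorSpectrum S) (tensorPower N c) = tensorPower N (freqProj S c) := by
  have hsub : (freqProj S c).support ⊆ c.support := fun α hα => by
    rw [Finsupp.mem_support_iff] at hα ⊢
    rwa [← freqProj_apply_of_mem (freqProj_mem_supported S c (Finsupp.mem_support_iff.2 hα))]
  rw [tensorPower_eq_sum_of_support_subset hsub, tensorPower, map_sum]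
  refine Finset.sum_congr rfl fun l hl => ?_
  have hl0 : l 0 ≠ 0 := fun h =>
    Finsupp.mem_support_iff.1 (Fintype.mem_piFinset.1 hl 0) (h ▸ hc)
  by_cases h : ∀ i, l i ∈ S
  · rw [freqProj_single_of_mem ((assemble_mem_tensorSpectrum_iff hl0).2 h)]
    simp only [freqProj_apply_of_mem (h _)]
  · rw [freqProj_single_of_notMem (h ∘ (assemble_mem_tensorSpectrum_iff hl0).1)]
    obtain ⟨i, hi⟩ := not_forall.1 h
    rw [Finset.prod_eq_zero (Finset.mem_univ i)
      ((Finsupp.mem_supported' ℂ _).1 (freqProj_mem_supported S c) _ hi), Finsupp.single_zero]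

/-- The variables of the blocks of level `N`. -/
def levelRestrict (d : ℕ) [NeZero d] (N : ℕ) :
    TorusInf →+ (Fin (N + 1) → Fin d → UnitAddCircle) where
  toFun z i r := z (blockVariable d (⟨N, i⟩, r))
  map_zero' := rfl
  map_add' _ _ := rfl

theorem levelRestrict_surjective : Function.Surjective (levelRestrict d N) := fun w => by
  have hinj : Function.Injective fun q : Fin (N + 1) × Fin d =>
      blockVariable d (⟨N, q.1⟩, q.2) := fun q q' h => by
    simpa [Prod.ext_iff] using (blockVariable d).injective h
  refine ⟨Function.extend (fun q : Fin (N + 1) × Fin d => blockVariable d (⟨N, q.1⟩, q.2))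
    (fun q => w q.1 q.2) 0, ?_⟩
  funext i r
  exact hinj.extend_apply (fun q => w q.1 q.2) 0 (i, r)

theorem measurePreserving_levelRestrict :
    MeasurePreserving (levelRestrict d N) haarTorusInf volume := by
  have : (volume : Measure (Fin (N + 1) → Fin d → UnitAddCircle)).IsAddHaarMeasure :=
    Measure.pi.isAddHaarMeasure fun _ => volume
  refine AddMonoidHom.measurePreserving ?_ levelRestrict_surjective (by simp)
  exact continuous_pi fun i => continuous_pi fun r => continuous_apply _

theorem torusPoly_tensorPower (c : (Fin d →₀ ℕ) →₀ ℂ) (z : TorusInf) :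
    torusPoly (tensorPower N c) z = ∏ i, torusPoly c (levelRestrict d N z i) := by
  classical
  simp only [torusPoly_apply c, Finset.prod_univ_sum, tensorPower, map_sum, torusPoly_single,
    ContinuousMap.sum_apply, ContinuousMap.smul_apply, assemble, torusMonomial_sum,
    ContinuousMap.prod_apply, torusMonomial_mapDomain, Finset.prod_mul_distrib, smul_eq_mul]
  rfl

end TensorPower

section LpNorm

theorem eLpNorm_top_eq_enorm {X E : Type*} [TopologicalSpace X] [CompactSpace X]
    [MeasurableSpace X] [NormedAddCommGroup E] (μ : Measure X) [μ.IsOpenPosMeasure]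
    [OpensMeasurableSpace X] (f : C(X, E)) : eLpNorm f ∞ μ = ‖f‖ₑ := by
  rw [eLpNorm_exponent_top, f.enorm_eq_iSup_enorm]
  refine le_antisymm (essSup_le_of_ae_le _ (.of_forall fun x => le_iSup (fun x => ‖f x‖ₑ) x))
    (iSup_le fun x => ?_)
  have hclosed : IsClosed {y | ‖f y‖ₑ ≤ eLpNormEssSup f μ} :=
    isClosed_le (by fun_prop) continuous_const
  have huniv := (hclosed.ae_eq_univ_iff_eq (μ := μ)).1 (ae_eq_univ.2 ae_le_eLpNormEssSup)
  exact (Set.ext_iff.1 huniv x).2 trivial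

theorem norm_prod_comp_eval {ι X : Type*} [Fintype ι] [TopologicalSpace X] [CompactSpace X]
    [Nonempty X] (f : C(X, ℂ)) :
    ‖∏ i : ι, f.comp (ContinuousMap.eval i : C(ι → X, X))‖ = ‖f‖ ^ Fintype.card ι := by
  have happly (w : ι → X) :
      ‖(∏ i : ι, f.comp (ContinuousMap.eval i : C(ι → X, X))) w‖ = ∏ i, ‖f (w i)‖ := by
    simp [ContinuousMap.prod_apply, norm_prod]
  refine le_antisymm ((ContinuousMap.norm_le _ (by positivity)).2 fun w => ?_) ?_
  · rw [happly, ← Finset.card_univ, ← Finset.prod_const]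
    exact Finset.prod_le_prod (fun i _ => norm_nonneg _) fun i _ => f.norm_coe_le_norm (w i)
  · obtain ⟨x, -, hx⟩ :=
      isCompact_univ.exists_isMaxOn Set.univ_nonempty f.continuous.norm.continuousOn
    have hfx : ‖f‖ ≤ ‖f x‖ := (f.norm_le (norm_nonneg _)).2 fun y => hx (Set.mem_univ y)
    calc ‖f‖ ^ Fintype.card ι ≤ ‖f x‖ ^ Fintype.card ι := by gcongr
      _ = ‖(∏ i : ι, f.comp (ContinuousMap.eval i : C(ι → X, X))) fun _ => x‖ := by simp
      _ ≤ _ := ContinuousMap.norm_coe_le_norm _ _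

theorem eLpNorm_prod_eval {ι X : Type*} [Fintype ι] [TopologicalSpace X] [CompactSpace X]
    [SecondCountableTopology X] [Nonempty X] [MeasureSpace X] [BorelSpace X]
    [IsProbabilityMeasure (volume : Measure X)] [(volume : Measure X).IsOpenPosMeasure]
    (f : C(X, ℂ)) {p : ℝ≥0∞} (hp : p ≠ 0) :
    eLpNorm (fun w : ι → X => ∏ i, f (w i)) p volume = eLpNorm f p volume ^ Fintype.card ι := by
  have hcoe : (fun w : ι → X => ∏ i, f (w i)) =
      ∏ i : ι, f.comp (ContinuousMap.eval i : C(ι → X, X)) := by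
    ext w; simp
  obtain rfl | hp' := eq_or_ne p ∞
  · rw [hcoe, eLpNorm_top_eq_enorm, eLpNorm_top_eq_enorm, ← ofReal_norm, norm_prod_comp_eval,
      ENNReal.ofReal_pow (norm_nonneg _), ofReal_norm]
  · rw [eLpNorm_eq_integral_rpow_norm_of_continuous (by fun_prop) hp hp',
      eLpNorm_eq_integral_rpow_norm_of_continuous f.continuous hp hp',
      ← ENNReal.ofReal_pow (by positivity)]
    simp only [norm_prod, ← Real.finsetProd_rpow _ _ fun _ _ => norm_nonneg _]
    rw [integral_fintype_prod_volume_eq_pow fun x => ‖f x‖ ^ p.toReal,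
      Real.rpow_pow_comm (integral_nonneg fun x => by positivity)]

theorem exists_mul_pow_succ_lt_pow_succ {a b : ℝ≥0} (hab : a < b) (C : ℝ≥0) :
    ∃ N : ℕ, C * a ^ (N + 1) < b ^ (N + 1) := by
  obtain rfl | ha := eq_zero_or_pos a
  · exact ⟨0, by simpa using hab⟩
  · have hratio : 1 < b / a := (one_lt_div ha).2 hab
    obtain ⟨N, hN⟩ := pow_unbounded_of_one_lt C hratio
    have hN' : C < (b / a) ^ (N + 1) := hN.trans_le (pow_le_pow_right₀ hratio.le N.le_succ)
    rw [div_pow] at hN'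
    exact ⟨N, (lt_div_iff₀ (by positivity)).1 hN'⟩

end LpNorm

section TensorPowerTrick

variable {d : ℕ} [NeZero d]

theorem eLpNorm_torusPoly_tensorPower (N : ℕ) (c : (Fin d →₀ ℕ) →₀ ℂ) {p : ℝ≥0∞} (hp : p ≠ 0) :
    eLpNorm (torusPoly (tensorPower N c)) p haarTorusInf =
      eLpNorm (torusPoly c) p volume ^ (N + 1) := by
  have hcomp : ⇑(torusPoly (tensorPower N c)) =
      (fun w => ∏ i, torusPoly c (w i)) ∘ levelRestrict d N :=
    funext (torusPoly_tensorPower c)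
  rw [hcomp, eLpNorm_comp_measurePreserving _ measurePreserving_levelRestrict,
    eLpNorm_prod_eval (torusPoly c) hp, Fintype.card_fin]
  exact Continuous.aestronglyMeasurable (by fun_prop)

theorem not_bounded_freqProj_tensorSpectrum {S : Set (Fin d →₀ ℕ)} {c : (Fin d →₀ ℕ) →₀ ℂ}
    (hc : c 0 = 0) {p : ℝ≥0∞} (hp : p ≠ 0)
    (hlt : eLpNorm (torusPoly c) p volume < eLpNorm (torusPoly (freqProj S c)) p volume) :
    ¬∃ C : ℝ≥0, ∀ c', eLpNorm (torusPoly (freqProj (tensorSpectrum S) c')) p haarTorusInf ≤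
      C * eLpNorm (torusPoly c') p haarTorusInf := by
  rintro ⟨C, hC⟩
  have hfinite (c : (Fin d →₀ ℕ) →₀ ℂ) : eLpNorm (torusPoly c) p volume ≠ ∞ :=
    ((map_continuous (torusPoly c)).memLp_of_hasCompactSupport (.of_compactSpace _)).eLpNorm_ne_top
  lift eLpNorm (torusPoly c) p volume to ℝ≥0 using hfinite c with a ha
  lift eLpNorm (torusPoly (freqProj S c)) p volume to ℝ≥0 using hfinite _ with b hb
  obtain ⟨N, hN⟩ := exists_mul_pow_succ_lt_pow_succ (ENNReal.coe_lt_coe.1 hlt) C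
  have hbound := hC (tensorPower N c)
  rw [freqProj_tensorPower S hc, eLpNorm_torusPoly_tensorPower N _ hp,
    eLpNorm_torusPoly_tensorPower N _ hp, ← ha, ← hb] at hbound
  exact hN.not_ge (by exact_mod_cast hbound)

end TensorPowerTrick

section NormDerivative

theorem hasDerivAt_norm_rpow_of_ne_zero {E : Type*} [NormedAddCommGroup E] [InnerProductSpace ℝ E]
    {f : ℝ → E} {f' : E} {t : ℝ} (hf : HasDerivAt f f' t) (h0 : f t ≠ 0) (P : ℝ) :
    HasDerivAt (fun s => ‖f s‖ ^ P) (P * (‖f t‖ ^ (P - 2) * ⟪f t, f'⟫)) t := by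
  have hsq (x : E) (r : ℝ) : (‖x‖ ^ 2) ^ (r / 2) = ‖x‖ ^ r := by
    rw [← Real.rpow_natCast_mul (norm_nonneg x)]
    congr 1
    push_cast
    ring
  have h := hf.norm_sq.rpow_const (p := P / 2) (.inl (pow_ne_zero 2 (norm_ne_zero_iff.2 h0)))
  simp only [hsq, show P / 2 - 1 = (P - 2) / 2 by ring] at h
  exact h.congr_deriv (by ring)

variable {X : Type*} [TopologicalSpace X] [CompactSpace X] [MeasurableSpace X]
  [OpensMeasurableSpace X] (μ : Measure X) [IsFiniteMeasure μ]

theorem hasDerivAt_integral_of_continuousOn_deriv {F F' : ℝ → X → ℝ} {t : ℝ} {s : Set ℝ}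
    (hs : s ∈ 𝓝 t) (hF : ∀ r ∈ s, Continuous (F r))
    (hF' : ContinuousOn (fun z : ℝ × X => F' z.1 z.2) (s ×ˢ Set.univ))
    (h : ∀ r ∈ s, ∀ y, HasDerivAt (F · y) (F' r y) r) :
    HasDerivAt (fun r => ∫ y, F r y ∂μ) (∫ y, F' t y ∂μ) t := by
  obtain ⟨δ, hδ, hball⟩ := Metric.nhds_basis_closedBall.mem_iff.1 hs
  obtain ⟨K, hK⟩ := ((isCompact_closedBall t δ).prod isCompact_univ).exists_bound_of_continuousOn
    (hF'.mono (Set.prod_mono hball subset_rfl))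
  have hF't : Continuous (F' t) :=
    hF'.comp_continuous (f := fun y => (t, y)) (by fun_prop) fun y =>
      ⟨mem_of_mem_nhds hs, trivial⟩
  refine (hasDerivAt_integral_of_dominated_loc_of_deriv_le (bound := fun _ => K)
    (Metric.closedBall_mem_nhds t hδ) ?_ (integrable_of_continuous_s5 (hF t (mem_of_mem_nhds hs)))
    hF't.aestronglyMeasurable (.of_forall fun y r hr => hK (r, y) ⟨hr, trivial⟩)
    (integrable_const K) (.of_forall fun y r hr => h r (hball hr) y)).2
  filter_upwards [hs] with r hr using (hF r hr).aestronglyMeasurable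

theorem hasDerivAt_integral_norm_add_smul_rpow {E : Type*} [NormedAddCommGroup E]
    [InnerProductSpace ℝ E] (c q : C(X, E)) (hc : ∀ y, c y ≠ 0) (P : ℝ) :
    HasDerivAt (fun t : ℝ => ∫ y, ‖c y + t • q y‖ ^ P ∂μ)
      (P * ∫ y, ‖c y‖ ^ (P - 2) * ⟪c y, q y⟫ ∂μ) 0 := by
  have hnear : ∀ᶠ t : ℝ in 𝓝 0, ∀ y ∈ Set.univ, c y + t • q y ≠ 0 := by
    refine isCompact_univ.eventually_forall_of_forall_eventually fun y _ => ?_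
    have hcont : Continuous fun z : ℝ × X => c z.2 + z.1 • q z.2 := by fun_prop
    exact hcont.continuousAt.eventually_ne (by simpa using hc y)
  have hderiv := hasDerivAt_integral_of_continuousOn_deriv μ hnear
    (F := fun t y => ‖c y + t • q y‖ ^ P)
    (F' := fun t y => P * (‖c y + t • q y‖ ^ (P - 2) * ⟪c y + t • q y, q y⟫))
    (fun t ht => Continuous.rpow_const (by fun_prop) fun y =>
      .inl (norm_ne_zero_iff.2 (ht y trivial)))
    ?_ fun t ht y => hasDerivAt_norm_rpow_of_ne_zero ?_ (ht y trivial) P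
  · simpa [integral_const_mul] using hderiv
  · refine continuousOn_const.mul (ContinuousOn.mul (ContinuousOn.rpow_const (by fun_prop) ?_)
      (Continuous.continuousOn (by fun_prop)))
    exact fun z hz => .inl (norm_ne_zero_iff.2 (hz.1 z.2 trivial))
  · simpa using ((hasDerivAt_id t).smul_const (q y)).const_add (c y)

end NormDerivative

section BinomialExpansion

/-- The sum of the terms of degree at most `D` of the binomial series of `(1 + u) ^ b`. -/
def binomialPartialSum (D : ℕ) (b : ℝ) (u : ℂ) : ℂ :=
  ∑ j ∈ Finset.range (D + 1), ((Ring.choose b j : ℝ) : ℂ) * u ^ j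

theorem continuous_binomialPartialSum (D : ℕ) (b : ℝ) : Continuous (binomialPartialSum D b) :=
  continuous_finsetSum _ fun _ _ => by fun_prop

theorem isBigO_one_add_cpow_sub_binomialPartialSum (D : ℕ) (b : ℝ) :
    (fun u : ℂ => (1 + u) ^ (b : ℂ) - binomialPartialSum D b u) =O[𝓝 0] fun u => ‖u‖ ^ (D + 1) := by
  have h := (Complex.one_add_cpow_hasFPowerSeriesAt_zero (a := (b : ℂ))).isBigO_sub_partialSum_pow
    (D + 1)
  refine h.congr_left fun u => ?_
  simp only [zero_add, FormalMultilinearSeries.partialSum, binomialPartialSum,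
    binomialSeries_apply, smul_eq_mul, Complex.ofReal_choose, List.prod_ofFn, Finset.prod_const,
    Finset.card_univ, Fintype.card_fin]

theorem norm_rpow_mul_conj_eq_cpow_mul_conj_cpow {w : ℂ} (hw : w ≠ 0) (P : ℝ) :
    ((‖w‖ ^ (P - 2) : ℝ) : ℂ) * conj w =
      w ^ ((P / 2 - 1 : ℝ) : ℂ) * conj (w ^ ((P / 2 : ℝ) : ℂ)) := by
  have hsplit : w ^ ((P / 2 : ℝ) : ℂ) = w ^ ((P / 2 - 1 : ℝ) : ℂ) * w := by
    rw [show P / 2 = P / 2 - 1 + 1 by ring, Complex.ofReal_add, Complex.ofReal_one,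
      Complex.cpow_add _ _ hw, Complex.cpow_one, add_sub_cancel_right]
  rw [hsplit, map_mul, ← mul_assoc, Complex.mul_conj, Complex.normSq_eq_norm_sq,
    Complex.norm_cpow_real, ← Real.rpow_mul_natCast (norm_nonneg w)]
  push_cast
  ring_nf

theorem isBigO_norm_rpow_mul_conj_sub_binomialPartialSum (D : ℕ) (P : ℝ) :
    (fun u : ℂ => ((‖1 + u‖ ^ (P - 2) : ℝ) : ℂ) * conj (1 + u) -
      binomialPartialSum D (P / 2 - 1) u * conj (binomialPartialSum D (P / 2) u)) =O[𝓝 0]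
      fun u => ‖u‖ ^ (D + 1) := by
  have hleft := isBigO_one_add_cpow_sub_binomialPartialSum D (P / 2 - 1)
  have hright : (fun u : ℂ => conj ((1 + u) ^ ((P / 2 : ℝ) : ℂ)) -
      conj (binomialPartialSum D (P / 2) u)) =O[𝓝 0] fun u => ‖u‖ ^ (D + 1) := by
    refine .of_norm_left ?_
    simpa only [← map_sub, RCLike.norm_conj] using
      (isBigO_one_add_cpow_sub_binomialPartialSum D (P / 2)).norm_left
  have hcpow : (fun u : ℂ => conj ((1 + u) ^ ((P / 2 : ℝ) : ℂ))) =O[𝓝 0] fun _ => (1 : ℝ) := by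
    refine Filter.Tendsto.isBigO_one ℝ (Complex.continuous_conj.continuousAt.comp ?_)
    exact ContinuousAt.cpow (by fun_prop) (by fun_prop) (by simp)
  have hpartial : binomialPartialSum D (P / 2 - 1) =O[𝓝 0] fun _ => (1 : ℝ) :=
    (continuous_binomialPartialSum D _).continuousAt.isBigO_one ℝ
  have hne : ∀ᶠ u : ℂ in 𝓝 0, 1 + u ≠ 0 :=
    ContinuousAt.eventually_ne (by fun_prop) (by simp)
  have hsum := (hleft.mul hcpow).add ((hpartial.mul hright).congr_right fun u => mul_comm 1 _)
  simp only [mul_one] at hsum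
  refine hsum.congr' ?_ .rfl
  filter_upwards [hne] with u hu
  rw [norm_rpow_mul_conj_eq_cpow_mul_conj_cpow hu]
  ring

theorem ringChoose_ne_zero_of_forall_ne {K : Type*} [Field K] [CharZero K] {b : K} {n : ℕ}
    (h : ∀ j < n, b ≠ j) : Ring.choose b n ≠ 0 := by
  have heval : (descPochhammer ℤ n).smeval b = ∏ j ∈ Finset.range n, (b - j) := by
    rw [← descPochhammer_eval_eq_prod_range, ← descPochhammer_map (Int.castRingHom K),
      Polynomial.eval_map, ← Polynomial.aeval_eq_smeval]
    rfl
  rw [Ring.choose_eq_smul, heval]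
  refine smul_ne_zero (inv_ne_zero (mod_cast n.factorial_ne_zero)) ?_
  exact Finset.prod_ne_zero_iff.2 fun j hj => sub_ne_zero.2 (h j (Finset.mem_range.1 hj))

end BinomialExpansion

section Moments

theorem eventually_ne_zero_of_isBigO_pow_succ {f : ℝ → ℝ} {a : ℝ} {D : ℕ} (ha : a ≠ 0)
    (h : (fun x => f x - a * x ^ D) =O[𝓝 0] fun x => x ^ (D + 1)) : ∀ᶠ x in 𝓝[≠] 0, f x ≠ 0 := by
  have hequiv : Asymptotics.IsEquivalent (𝓝 0) f fun x => a * x ^ D :=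
    (h.trans_isLittleO (Asymptotics.isLittleO_pow_pow D.lt_succ_self)).trans_isBigO
      (Asymptotics.isBigO_self_const_mul ha _ _)
  filter_upwards [hequiv.isTheta.eq_zero_iff.filter_mono nhdsWithin_le_nhds,
    self_mem_nhdsWithin] with x hx hx0
  exact hx.not.2 (mul_ne_zero ha (pow_ne_zero D hx0))

theorem eventually_one_add_mul_ne_zero {X : Type*} [TopologicalSpace X] [CompactSpace X]
    (S : C(X, ℂ)) : ∀ᶠ x : ℝ in 𝓝 0, ∀ y, 1 + x * S y ≠ 0 := by
  suffices ∀ᶠ x : ℝ in 𝓝 0, ∀ y ∈ Set.univ, 1 + x * S y ≠ 0 by simpa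
  refine isCompact_univ.eventually_forall_of_forall_eventually fun y _ => ?_
  have hcont : Continuous fun z : ℝ × X => (1 + z.1 * S z.2 : ℂ) := by fun_prop
  exact hcont.continuousAt.eventually_ne (by simp)

variable {X : Type*} [TopologicalSpace X] [CompactSpace X] [MeasurableSpace X]
  {μ : Measure X} [IsFiniteMeasure μ]

theorem isBigO_integral_mul_comp_mul {h : ℂ → ℂ} {k : ℕ} (hh : h =O[𝓝 0] fun u => ‖u‖ ^ k)
    (q S : C(X, ℂ)) : (fun x : ℝ => ∫ y, q y * h (x * S y) ∂μ) =O[𝓝 0] fun x => x ^ k := by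
  obtain ⟨C, hC, hbound⟩ := hh.exists_pos
  have hsmall : ∀ᶠ x : ℝ in 𝓝 0, ∀ y ∈ Set.univ, ‖h (x * S y)‖ ≤ C * ‖‖(x * S y : ℂ)‖ ^ k‖ := by
    refine isCompact_univ.eventually_forall_of_forall_eventually fun y _ => ?_
    have hcont : Continuous fun z : ℝ × X => (z.1 * S z.2 : ℂ) := by fun_prop
    exact (hcont.tendsto' (0, y) 0 (by simp)).eventually hbound.bound
  refine .of_bound (‖q‖ * (C * ‖S‖ ^ k) * μ.real Set.univ) ?_
  filter_upwards [hsmall] with x hx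
  refine (norm_integral_le_of_norm_le_const (C := ‖q‖ * (C * (|x| * ‖S‖) ^ k))
    (.of_forall fun y => ?_)).trans_eq ?_
  · rw [norm_mul]
    gcongr
    · exact q.norm_coe_le_norm y
    · refine (hx y trivial).trans ?_
      rw [norm_pow, norm_norm, norm_mul, Complex.norm_real, Real.norm_eq_abs]
      gcongr
      exact S.norm_coe_le_norm y
  · rw [norm_pow, Real.norm_eq_abs]
    ring

variable [OpensMeasurableSpace X]

theorem integral_mul_binomialPartialSum_mul_conj {D : ℕ} {S q : C(X, ℂ)}
    (hmoment : ∀ j l, j ≤ D → j ≠ l + D → ∫ y, q y * S y ^ j * conj (S y) ^ l ∂μ = 0)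
    (a b x : ℝ) :
    ∫ y, q y * (binomialPartialSum D a (x * S y) * conj (binomialPartialSum D b (x * S y))) ∂μ =
      ((Ring.choose a D * x ^ D : ℝ) : ℂ) * ∫ y, q y * S y ^ D ∂μ := by
  have expand (y : X) :
      q y * (binomialPartialSum D a (x * S y) * conj (binomialPartialSum D b (x * S y))) =
      ∑ j ∈ Finset.range (D + 1), ∑ l ∈ Finset.range (D + 1),
        ((Ring.choose a j * x ^ j * (Ring.choose b l * x ^ l) : ℝ) : ℂ) *
          (q y * S y ^ j * conj (S y) ^ l) := by
    rw [binomialPartialSum, binomialPartialSum, map_sum, Finset.sum_mul_sum]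
    simp only [Finset.mul_sum, map_mul, map_pow, Complex.conj_ofReal]
    refine Finset.sum_congr rfl fun j _ => Finset.sum_congr rfl fun l _ => ?_
    push_cast
    ring
  simp only [expand]
  rw [integral_finsetSum _ fun j _ => integrable_of_continuous_s5 (by fun_prop),
    Finset.sum_eq_single_of_mem D (by simp) ?_, integral_finsetSum _ fun l _ =>
      integrable_of_continuous_s5 (by fun_prop), Finset.sum_eq_single_of_mem 0 (by simp) ?_]
  · simp [integral_const_mul]
  · intro l _ hl
    rw [integral_const_mul, hmoment D l le_rfl (by omega), mul_zero]
  · intro j hj hjD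
    rw [integral_finsetSum _ fun l _ => integrable_of_continuous_s5 (by fun_prop)]
    refine Finset.sum_eq_zero fun l _ => ?_
    rw [integral_const_mul, hmoment j l (Finset.mem_range_succ_iff.1 hj) ?_, mul_zero]
    have := Finset.mem_range_succ_iff.1 hj
    omega

theorem eventually_re_integral_norm_rpow_mul_conj_ne_zero {D : ℕ} {P : ℝ} {S q : C(X, ℂ)}
    (hchoose : Ring.choose (P / 2 - 1) D ≠ 0)
    (hmoment : ∀ j l, j ≤ D → j ≠ l + D → ∫ y, q y * S y ^ j * conj (S y) ^ l ∂μ = 0)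
    (htop : (∫ y, q y * S y ^ D ∂μ).re ≠ 0) :
    ∀ᶠ x : ℝ in 𝓝[≠] 0, ∫ y, ‖1 + x * S y‖ ^ (P - 2) * ⟪1 + x * S y, q y⟫ ∂μ ≠ 0 := by
  set κ := ∫ y, q y * S y ^ D ∂μ
  refine eventually_ne_zero_of_isBigO_pow_succ (D := D) (mul_ne_zero hchoose htop) ?_
  have hbigO := isBigO_integral_mul_comp_mul (μ := μ)
    (isBigO_norm_rpow_mul_conj_sub_binomialPartialSum D P) q S
  refine (Asymptotics.IsBigO.of_bound' (.of_forall fun x => Complex.abs_re_le_norm _)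
    |>.trans hbigO).congr' ?_ .rfl
  filter_upwards [eventually_one_add_mul_ne_zero S] with x hx
  have hweight : Continuous fun y => q y * (((‖1 + x * S y‖ ^ (P - 2) : ℝ) : ℂ) *
      conj (1 + x * S y)) := by
    have : Continuous fun y => ‖1 + x * S y‖ ^ (P - 2) :=
      Continuous.rpow_const (by fun_prop) fun y => .inl (norm_ne_zero_iff.2 (hx y))
    fun_prop
  have hpartial (b : ℝ) := continuous_binomialPartialSum D b
  have hre (w v : ℂ) : (v * (((‖w‖ ^ (P - 2) : ℝ) : ℂ) * conj w)).re = ‖w‖ ^ (P - 2) * ⟪w, v⟫ := by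
    rw [mul_left_comm, Complex.re_ofReal_mul, Complex.inner]
  have hre_integral := integral_re (integrable_of_continuous_s5 (μ := μ) hweight)
  simp only [RCLike.re_to_complex, hre] at hre_integral
  simp only [mul_sub]
  rw [integral_sub (integrable_of_continuous_s5 hweight) (integrable_of_continuous_s5 (by fun_prop)),
    integral_mul_binomialPartialSum_mul_conj hmoment, Complex.sub_re, ← hre_integral,
    Complex.re_ofReal_mul]
  ring

theorem exists_integral_norm_one_add_rpow_lt {D : ℕ} {P : ℝ} {S q : C(X, ℂ)} (hP : P ≠ 0)
    (hchoose : Ring.choose (P / 2 - 1) D ≠ 0)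
    (hmoment : ∀ j l, j ≤ D → j ≠ l + D → ∫ y, q y * S y ^ j * conj (S y) ^ l ∂μ = 0)
    (htop : (∫ y, q y * S y ^ D ∂μ).re ≠ 0) :
    ∃ x ε : ℝ, ∫ y, ‖1 + x * S y + ε * q y‖ ^ P ∂μ < ∫ y, ‖1 + x * S y‖ ^ P ∂μ := by
  obtain ⟨x, hx⟩ := (((eventually_one_add_mul_ne_zero S).filter_mono nhdsWithin_le_nhds).and
    (eventually_re_integral_norm_rpow_mul_conj_ne_zero hchoose hmoment htop)).exists
  by_contra! hmin
  have hderiv :=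
    hasDerivAt_integral_norm_add_smul_rpow μ (1 + (x : ℂ) • S) q (by simpa using hx.1) P
  have hlocal : IsLocalMin (fun t : ℝ => ∫ y, ‖(1 + (x : ℂ) • S) y + t • q y‖ ^ P ∂μ) 0 :=
    .of_forall fun t => by simpa using hmin x t
  exact (mul_ne_zero hP hx.2) (hlocal.hasDerivAt_eq_zero hderiv)

end Moments

section SupNorm

theorem exists_norm_sub_smul_lt_norm {X E : Type*} [TopologicalSpace X] [CompactSpace X]
    [Nonempty X] [NormedAddCommGroup E] [InnerProductSpace ℝ E] {g q : C(X, E)}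
    (h : ∀ y, ‖g y‖ = ‖g‖ → 0 < ⟪g y, q y⟫) : ∃ ε : ℝ, ‖g - ε • q‖ < ‖g‖ := by
  have hlocal : ∀ᶠ ε : ℝ in 𝓝 0, ∀ y ∈ Set.univ, 0 < ε → ‖g y - ε • q y‖ < ‖g‖ := by
    refine isCompact_univ.eventually_forall_of_forall_eventually fun y _ => ?_
    obtain hlt | heq := (g.norm_coe_le_norm y).lt_or_eq
    · have hcont : Continuous fun z : ℝ × X => ‖g z.2 - z.1 • q z.2‖ := by fun_prop
      filter_upwards [(hcont.tendsto (0, y)).eventually_lt_const (u := ‖g‖)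
        (by simpa using hlt)] with z hz _ using hz
    · have hcont : Continuous fun z : ℝ × X => z.1 * ‖q z.2‖ ^ 2 - 2 * ⟪g z.2, q z.2⟫ := by
        fun_prop
      filter_upwards [(hcont.tendsto (0, y)).eventually_lt_const (u := 0)
        (by simpa using h y heq)] with ⟨ε, y'⟩ hz hε
      have hdecrease := mul_neg_of_pos_of_neg hε hz
      refine lt_of_lt_of_le (lt_of_pow_lt_pow_left₀ 2 (norm_nonneg _) ?_) (g.norm_coe_le_norm y')
      rw [norm_sub_sq_real, inner_smul_right, norm_smul, Real.norm_eq_abs, mul_pow, sq_abs]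
      linear_combination hdecrease
  obtain ⟨ε, hlt, hε⟩ := ((hlocal.filter_mono nhdsWithin_le_nhds).and
    (self_mem_nhdsWithin (s := Set.Ioi (0 : ℝ)))).exists
  exact ⟨ε, (ContinuousMap.norm_lt_iff_of_nonempty _).2 fun y => hlt y trivial hε⟩

end SupNorm

section BlockPolynomial

variable {n : ℕ}

/-- The coefficients of `y₀ ⋯ yₙ₊₁ + x (y₁ⁿ⁺² + ⋯ + yₙ₊₁ⁿ⁺²) + ε y₀ⁿ⁺²`, in which the projection
onto `blockSpectrum n` only drops the last term. -/
def blockPoly (n : ℕ) (x ε : ℝ) : (Fin (n + 2) →₀ ℕ) →₀ ℂ :=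
  Finsupp.single (allOnes n) 1 +
    ∑ k : Fin (n + 1), Finsupp.single (Finsupp.single k.succ (n + 2)) (x : ℂ) +
    Finsupp.single (Finsupp.single 0 (n + 2)) (ε : ℂ)

theorem blockPoly_apply_zero (x ε : ℝ) : blockPoly n x ε 0 = 0 := by
  have hones : allOnes n ≠ 0 := fun h => one_ne_zero (DFunLike.congr_fun h 0)
  simp [blockPoly, hones]

theorem single_zero_notMem_blockSpectrum : Finsupp.single 0 (n + 2) ∉ blockSpectrum n := by
  rintro (h | ⟨k, h⟩)
  · simpa [allOnes_apply] using DFunLike.congr_fun h 0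
  · simpa using DFunLike.congr_fun h 0

theorem freqProj_blockPoly (x ε : ℝ) :
    freqProj (blockSpectrum n) (blockPoly n x ε) = blockPoly n x 0 := by
  have hones : allOnes n ∈ blockSpectrum n := Set.mem_insert _ _
  have hpower (k : Fin (n + 1)) : Finsupp.single k.succ (n + 2) ∈ blockSpectrum n :=
    Set.mem_insert_of_mem _ ⟨k, rfl⟩
  simp only [blockPoly, map_add, map_sum, freqProj_single_of_mem hones,
    freqProj_single_of_mem (hpower _), freqProj_single_of_notMem single_zero_notMem_blockSpectrum,
    Complex.ofReal_zero, Finsupp.single_zero]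

/-- The quotient `yₖⁿ⁺² / (y₀ ⋯ yₙ₊₁)` of two monomials of `blockPoly`. -/
def blockPhase (k : Fin (n + 2)) : C(Fin (n + 2) → UnitAddCircle, ℂ) :=
  torusMonomial (Finsupp.single k (n + 2)) * star (torusMonomial (allOnes n))

theorem blockPhase_apply (k : Fin (n + 2)) (y : Fin (n + 2) → UnitAddCircle) :
    blockPhase k y =
      torusMonomial (Finsupp.single k (n + 2)) y * conj (torusMonomial (allOnes n) y) := rfl

theorem norm_blockPhase (k : Fin (n + 2)) (y : Fin (n + 2) → UnitAddCircle) :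
    ‖blockPhase k y‖ = 1 := by
  rw [blockPhase_apply, norm_mul, RCLike.norm_conj, norm_torusMonomial, norm_torusMonomial, one_mul]

theorem torusMonomial_eq_mul_blockPhase (k : Fin (n + 2)) (y : Fin (n + 2) → UnitAddCircle) :
    torusMonomial (Finsupp.single k (n + 2)) y = torusMonomial (allOnes n) y * blockPhase k y := by
  rw [blockPhase_apply, mul_left_comm, Complex.mul_conj, Complex.normSq_eq_norm_sq,
    norm_torusMonomial, one_pow, Complex.ofReal_one, mul_one]

theorem prod_blockPhase {I : Type*} [Fintype I] (σ : I → Fin (n + 2))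
    (y : Fin (n + 2) → UnitAddCircle) :
    ∏ i, blockPhase (σ i) y =
      torusMonomial (∑ i, Finsupp.single (σ i) (n + 2)) y *
        conj (torusMonomial (∑ _i : I, allOnes n) y) := by
  simp only [torusMonomial_sum, ContinuousMap.prod_apply, map_prod, blockPhase_apply,
    Finset.prod_mul_distrib]

theorem sum_single_eq_sum_allOnes (n : ℕ) :
    ∑ k : Fin (n + 2), Finsupp.single k (n + 2) = ∑ _k : Fin (n + 2), allOnes n := by
  ext r
  simp only [Finsupp.finsetSum_apply, Finsupp.single_apply, Finset.sum_ite_eq', Finset.mem_univ,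
    if_true, allOnes_apply, Finset.sum_const, Finset.card_univ, Fintype.card_fin,
    Finsupp.smul_apply, smul_eq_mul, mul_one]

theorem prod_univ_blockPhase (y : Fin (n + 2) → UnitAddCircle) : ∏ k, blockPhase k y = 1 := by
  rw [prod_blockPhase fun k => k, sum_single_eq_sum_allOnes, Complex.mul_conj,
    Complex.normSq_eq_norm_sq, norm_torusMonomial, one_pow, Complex.ofReal_one]

/-- The sum of the phases of the frequencies kept by the projection. -/
def phaseSum (n : ℕ) : C(Fin (n + 2) → UnitAddCircle, ℂ) :=
  ∑ k : Fin (n + 1), blockPhase k.succ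

theorem phaseSum_apply (y : Fin (n + 2) → UnitAddCircle) :
    phaseSum n y = ∑ k : Fin (n + 1), blockPhase k.succ y := ContinuousMap.sum_apply ..

theorem norm_torusPoly_blockPoly (x ε : ℝ) (y : Fin (n + 2) → UnitAddCircle) :
    ‖torusPoly (blockPoly n x ε) y‖ = ‖1 + x * phaseSum n y + ε * blockPhase 0 y‖ := by
  have hfactor : torusPoly (blockPoly n x ε) y =
      torusMonomial (allOnes n) y * (1 + x * phaseSum n y + ε * blockPhase 0 y) := by
    simp only [blockPoly, map_add, map_sum, torusPoly_single, ContinuousMap.add_apply,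
      ContinuousMap.sum_apply, ContinuousMap.smul_apply, smul_eq_mul,
      torusMonomial_eq_mul_blockPhase, phaseSum_apply, Finset.mul_sum, mul_add,
      mul_left_comm (torusMonomial (allOnes n) y), one_mul, mul_one]
  rw [hfactor, norm_mul, norm_torusMonomial, one_mul]

section Moments

variable (μ : Measure (Fin (n + 2) → UnitAddCircle)) [μ.IsAddRightInvariant]

-- Translating `y₀` multiplies every summand of `phaseSum` by the same character.
theorem integral_blockPhase_mul_phaseSum_pow_eq_zero {j l : ℕ} (h : j ≠ l + (n + 1)) :
    ∫ y, blockPhase 0 y * phaseSum n y ^ j * conj (phaseSum n y) ^ l ∂μ = 0 := by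
  obtain ⟨t, ht⟩ := exists_fourier_eq_neg_one (m := (n + 1 + l - j : ℤ)) (by omega)
  set u : ℂ := fourier 1 t with hu
  have fourier_eq (m : ℤ) : (fourier m t : ℂ) = u ^ m := by
    simp [hu, fourier_apply, AddCircle.toCircle_zsmul]
  have hu0 : u ≠ 0 := by simp [hu, fourier_apply]
  have hconj : conj u = u⁻¹ := by rw [hu, ← fourier_neg, fourier_eq, zpow_neg_one]
  have hphase (k : Fin (n + 2)) (y) : blockPhase k (y + Pi.single 0 t) =
      u ^ Finsupp.single k (n + 2) 0 * u⁻¹ * blockPhase k y := by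
    rw [blockPhase_apply, blockPhase_apply, torusMonomial_apply_add, torusMonomial_apply_add,
      torusMonomial_apply_single, torusMonomial_apply_single, allOnes_apply, map_mul, Nat.cast_one,
      ← hu, hconj, fourier_eq, zpow_natCast]
    ring
  have hsum (y) : phaseSum n (y + Pi.single 0 t) = u⁻¹ * phaseSum n y := by
    simp [phaseSum_apply, hphase, Finset.mul_sum]
  refine integral_eq_zero_of_add_right_eq_mul (c := -1) (by norm_num) (Pi.single 0 t) fun y => ?_
  have hfactor : u ^ (n + 2) * u⁻¹ * u⁻¹ ^ j * u ^ l = -1 := by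
    rw [← ht, fourier_eq, zpow_sub₀ hu0, zpow_add₀ hu0, zpow_add₀ hu0]
    simp only [zpow_natCast, zpow_one, inv_pow]
    field_simp
    ring
  rw [hphase, hsum, Finsupp.single_eq_same, map_mul, map_inv₀, hconj, inv_inv, mul_pow, mul_pow,
    ← hfactor]
  ring

theorem integral_blockPhase_mul_phaseSum_pow_re_pos [IsProbabilityMeasure μ] :
    0 < (∫ y, blockPhase 0 y * phaseSum n y ^ (n + 1) ∂μ).re := by
  have hexpand (y : Fin (n + 2) → UnitAddCircle) : blockPhase 0 y * phaseSum n y ^ (n + 1) =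
      ∑ σ : Fin (n + 1) → Fin (n + 1),
        torusMonomial (∑ i, Finsupp.single (Fin.cons 0 (Fin.succ ∘ σ) i) (n + 2)) y *
          conj (torusMonomial (∑ _i : Fin (n + 2), allOnes n) y) := by
    simp only [← prod_blockPhase]
    rw [phaseSum_apply, Fintype.sum_pow, Finset.mul_sum]
    simp [Fin.prod_univ_succ]
  simp only [hexpand]
  rw [integral_finsetSum _ fun σ _ => integrable_of_continuous_s5 (by fun_prop)]
  simp only [integral_torusMonomial_mul_conj, Complex.re_sum]
  refine Finset.sum_pos' (fun σ _ => by split_ifs <;> simp) ⟨id, Finset.mem_univ _, ?_⟩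
  rw [Function.comp_id, show (Fin.cons 0 Fin.succ : Fin (n + 2) → Fin (n + 2)) = id from
    funext (Fin.cases rfl fun _ => rfl)]
  simp only [id_eq, sum_single_eq_sum_allOnes, if_true, Complex.one_re, zero_lt_one]

end Moments

theorem eq_one_of_card_add_one_le_norm_one_add_sum {ι : Type*} [Fintype ι] {t : ι → ℂ}
    (ht : ∀ k, ‖t k‖ = 1) (h : Fintype.card ι + 1 ≤ ‖1 + ∑ k, t k‖) (k : ι) : t k = 1 := by
  classical
  have hrest : ‖∑ i ∈ Finset.univ.erase k, t i‖ ≤ Fintype.card ι - 1 := by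
    refine (norm_sum_le _ _).trans_eq ?_
    simp [ht, Nat.cast_sub (Fintype.card_pos_iff.2 ⟨k⟩)]
  have htwo : (2 : ℝ) ≤ ‖1 + t k‖ := by
    rw [← Finset.add_sum_erase _ _ (Finset.mem_univ k), ← add_assoc] at h
    linarith [norm_add_le (1 + t k) (∑ i ∈ Finset.univ.erase k, t i)]
  refine (eq_of_norm_eq_of_norm_add_eq (by simp [ht]) ?_).symm
  linarith [norm_add_le (1 : ℂ) (t k), ht k, norm_one (α := ℂ)]

theorem one_add_phaseSum_apply {y : Fin (n + 2) → UnitAddCircle} (h : ∀ k, blockPhase k y = 1) :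
    (1 + phaseSum n) y = (n + 2 : ℕ) := by
  simp only [ContinuousMap.add_apply, ContinuousMap.one_apply, phaseSum_apply, h,
    Finset.sum_const, Finset.card_univ, Fintype.card_fin, nsmul_eq_mul]
  push_cast
  ring

theorem norm_one_add_phaseSum (n : ℕ) : ‖1 + phaseSum n‖ = (n + 2 : ℕ) := by
  refine le_antisymm ((ContinuousMap.norm_le _ (by positivity)).2 fun y => ?_) ?_
  · rw [ContinuousMap.add_apply, phaseSum_apply]
    refine (norm_add_le_of_le norm_one.le (norm_sum_le _ _)).trans_eq ?_
    simp only [norm_blockPhase, Finset.sum_const, Finset.card_univ, Fintype.card_fin, nsmul_eq_mul]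
    push_cast
    ring
  · rw [← Complex.norm_natCast, ← one_add_phaseSum_apply (y := 0) fun k => by
      simp [blockPhase_apply, torusMonomial_apply]]
    exact ContinuousMap.norm_coe_le_norm _ _

-- All phases in `phaseSum` are `1` at a maximum, hence so is the remaining one.
theorem blockPhase_eq_one_of_norm_eq {y : Fin (n + 2) → UnitAddCircle}
    (h : ‖(1 + phaseSum n) y‖ = ‖1 + phaseSum n‖) : ∀ k, blockPhase k y = 1 := by
  have hsucc : ∀ k : Fin (n + 1), blockPhase k.succ y = 1 := by
    refine eq_one_of_card_add_one_le_norm_one_add_sum (fun k => norm_blockPhase _ y) ?_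
    rw [norm_one_add_phaseSum, ContinuousMap.add_apply, phaseSum_apply] at h
    refine Eq.trans_le ?_ h.ge
    rw [Fintype.card_fin]
    norm_cast
  refine Fin.cases ?_ hsucc
  simpa [Fin.prod_univ_succ, hsucc] using prod_univ_blockPhase y

theorem exists_norm_blockPoly_lt (n : ℕ) :
    ∃ x ε : ℝ, ‖torusPoly (blockPoly n x ε)‖ < ‖torusPoly (blockPoly n x 0)‖ := by
  have hkeep : ‖torusPoly (blockPoly n 1 0)‖ = ‖1 + phaseSum n‖ := by
    simp [ContinuousMap.norm_eq_iSup_norm, norm_torusPoly_blockPoly]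
  have hfull (ε : ℝ) :
      ‖torusPoly (blockPoly n 1 (-ε))‖ = ‖1 + phaseSum n - ε • blockPhase (n := n) 0‖ := by
    simp [ContinuousMap.norm_eq_iSup_norm, norm_torusPoly_blockPoly, sub_eq_add_neg]
  obtain ⟨ε, hε⟩ := exists_norm_sub_smul_lt_norm (g := 1 + phaseSum n) (q := blockPhase 0)
    fun y hy => by
      have hphase := blockPhase_eq_one_of_norm_eq hy
      rw [one_add_phaseSum_apply hphase, hphase 0, Complex.inner, one_mul, Complex.conj_natCast,
        Complex.natCast_re]
      positivity
  exact ⟨1, -ε, by rwa [hfull, hkeep]⟩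

theorem exists_eLpNorm_blockPoly_lt {p : ℝ≥0∞} (hp : p ≠ 0)
    (heven : ∀ m ≤ n, p ≠ 2 * (m + 1 : ℕ)) :
    ∃ x ε : ℝ, eLpNorm (torusPoly (blockPoly n x ε)) p volume <
      eLpNorm (torusPoly (blockPoly n x 0)) p volume := by
  obtain rfl | hp' := eq_or_ne p ∞
  · simp only [eLpNorm_top_eq_enorm, enorm_eq_nnnorm, ENNReal.coe_lt_coe]
    exact exists_norm_blockPoly_lt n
  have hchoose : Ring.choose (p.toReal / 2 - 1) (n + 1) ≠ 0 := by
    refine ringChoose_ne_zero_of_forall_ne fun m hm h => heven m (Nat.lt_succ_iff.1 hm) ?_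
    rw [← ENNReal.toReal_eq_toReal_iff' hp' (by finiteness), ENNReal.toReal_mul,
      ENNReal.toReal_natCast, ENNReal.toReal_ofNat]
    push_cast
    linarith
  have hP : p.toReal ≠ 0 := ENNReal.toReal_ne_zero.2 ⟨hp, hp'⟩
  obtain ⟨x, ε, hlt⟩ := exists_integral_norm_one_add_rpow_lt (μ := volume) hP hchoose
    (fun j l _ h => integral_blockPhase_mul_phaseSum_pow_eq_zero volume h)
    (integral_blockPhase_mul_phaseSum_pow_re_pos (n := n) volume).ne'
  refine ⟨x, ε, ?_⟩
  rw [eLpNorm_eq_integral_rpow_norm_of_continuous (map_continuous _) hp hp',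
    eLpNorm_eq_integral_rpow_norm_of_continuous (map_continuous _) hp hp']
  simp only [norm_torusPoly_blockPoly, Complex.ofReal_zero, zero_mul, add_zero]
  have hnonneg (f : (Fin (n + 2) → UnitAddCircle) → ℂ) : 0 ≤ ∫ y, ‖f y‖ ^ p.toReal :=
    integral_nonneg fun y => by positivity
  have hpos := (hnonneg _).trans_lt hlt
  exact (ENNReal.ofReal_lt_ofReal_iff (Real.rpow_pos_of_pos hpos _)).2
    (Real.rpow_lt_rpow (hnonneg _) hlt (by positivity))

end BlockPolynomial

theorem exists_operator_bounded_iff_even_general (n : ℕ) :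
    ∃ T : ((ℕ →₀ ℕ) →₀ ℂ) →ₗ[ℂ] ((ℕ →₀ ℕ) →₀ ℂ),
      ∀ p : ℝ≥0∞, p ≠ 0 →
        ((∃ C : ℝ≥0, ∀ c : (ℕ →₀ ℕ) →₀ ℂ,
            eLpNorm (evalAPoly (T c)) p haarTorusInf
              ≤ C * eLpNorm (evalAPoly c) p haarTorusInf)
          ↔ ∃ m : ℕ, 1 ≤ m ∧ m ≤ n + 1 ∧ p = 2 * m) := by
  have hclosed : DifferenceClosed n (tensorSpectrum (blockSpectrum n)) :=
    (differenceClosed_blockSpectrum n).tensorSpectrum (Nat.succ_pos _)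
      fun _ => degree_of_mem_blockSpectrum
  refine ⟨freqProj (tensorSpectrum (blockSpectrum n)), fun p hp => ?_⟩
  simp only [evalAPoly_eq_torusPoly]
  constructor
  · intro hbounded
    by_contra hnot_even
    obtain ⟨x, ε, hlt⟩ := exists_eLpNorm_blockPoly_lt (n := n) hp fun m hm h =>
      hnot_even ⟨m + 1, m.succ_pos, Nat.succ_le_succ hm, h⟩
    rw [← freqProj_blockPoly x ε] at hlt
    exact not_bounded_freqProj_tensorSpectrum (blockPoly_apply_zero x ε) hp hlt hbounded
  · rintro ⟨m, hpos, hm, rfl⟩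
    obtain ⟨m, rfl⟩ := Nat.exists_eq_add_of_le' hpos
    refine ⟨1, fun c => ?_⟩
    rw [ENNReal.coe_one, one_mul]
    exact hclosed.eLpNorm_freqProj_le haarTorusInf (Nat.le_of_succ_le_succ hm) c

end

/-- Theorem 4: there is a linear operator on analytic polynomials on `𝕋^∞` which is
bounded in the `L^p(𝕋^∞)` norm exactly for `p = 2, 4, …, 2(n+1)`. -/
theorem exists_operator_bounded_iff_even (n : ℕ) (hn : 1 ≤ n) :
    ∃ T : ((ℕ →₀ ℕ) →₀ ℂ) →ₗ[ℂ] ((ℕ →₀ ℕ) →₀ ℂ),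
      ∀ p : ℝ≥0∞, 1 ≤ p →
        ((∃ C : ℝ≥0, ∀ c : (ℕ →₀ ℕ) →₀ ℂ,
            eLpNorm (evalAPoly (T c)) p haarTorusInf
              ≤ C * eLpNorm (evalAPoly c) p haarTorusInf)
          ↔ ∃ m : ℕ, 1 ≤ m ∧ m ≤ n + 1 ∧ p = 2 * m) := by
  obtain ⟨T, hT⟩ := exists_operator_bounded_iff_even_general n
  exact ⟨T, fun p hp => hT p (zero_lt_one.trans_le hp).ne'⟩

end
end
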